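/- arXiv:1504.05405 — 2 statements merged into one kernel-verified Lean document; each statement's English description precedes it below -/
import Mathlib

section
/- Exact asymptotics in dimension one: q_L(α,1,1) ∼ (1−α) as α → 1⁻, i.e. lim_{α→1⁻} q_L(α,1,1)/(1−α) = 1. -/
open MeasureTheory Filter ENNReal

/-- Sites of `ℤ^{d+1}`. -/
abbrev Site (d : ℕ) := Fin (d + 1) → ℤ

/-- Site-percolation configurations on `ℤ^{d+1}`: a site is open iff its value is `true`. -/
abbrev Config (d : ℕ) := Site d → Bool

/-- `P` is the i.i.d. Bernoulli(`p`) product measure on `{0,1}^ι`: it is a probability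
measure whose cylinder events have the correct product probabilities. -/
def IsBernoulli {ι : Type*} (p : ℝ) (P : Measure (ι → Bool)) : Prop :=
  IsProbabilityMeasure P ∧
    ∀ (s : Finset ι) (f : ι → Bool),
      P {ω | ∀ x ∈ s, ω x = f x} =
        ∏ x ∈ s, (if f x then ENNReal.ofReal p else ENNReal.ofReal (1 - p))

/-- A function `F : ℤ^d → ℤ` is Lipschitz: `‖x − y‖₁ = 1 → |F x − F y| ≤ 1`. -/
def IsLipschitzFn {d : ℕ} (F : (Fin d → ℤ) → ℤ) : Prop :=
  ∀ x y : Fin d → ℤ, (∑ i, |x i - y i|) = 1 → |F x - F y| ≤ 1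

/-- Height `⌊α ∑ᵢ ηᵢ xᵢ⌋` of the tilted plane `L^{α,d}_η` above `x ∈ ℤ^d`. -/
noncomputable def planeHt (α : ℝ) {d : ℕ} (η x : Fin d → ℤ) : ℤ :=
  ⌊α * ∑ i, (η i : ℝ) * (x i : ℝ)⌋

/-- `η ∈ {-1,0,1}^d`. -/
def IsSign {d : ℕ} (η : Fin d → ℤ) : Prop := ∀ i, η i = -1 ∨ η i = 0 ∨ η i = 1

/-- The event `LIP^{α,d}_η` that there is an open Lipschitz surface lying (strictly) above
the tilted plane `L^{α,d}_η`. -/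
def LIP (α : ℝ) {d : ℕ} (η : Fin d → ℤ) : Set (Config d) :=
  {ω | ∃ F : (Fin d → ℤ) → ℤ, IsLipschitzFn F ∧
    ∀ x : Fin d → ℤ, ω (Fin.snoc x (F x)) = true ∧ planeHt α η x < F x}

/-- `pc` is the critical probability `p_L(α,d,η)` of Lipschitz percolation above the tilted
plane `L^{α,d}_η`: `pc ∈ (0,1)`, for `p` below it there is `P_p`-a.s. no open Lipschitz
surface above the plane, and for `p` above it there `P_p`-a.s. is one.
(Here `P p` is the Bernoulli(`p`) product measure on `{0,1}^{ℤ^{d+1}}`.) -/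
def IsCriticalProb {d : ℕ} (P : ℝ → Measure (Config d)) (α : ℝ) (η : Fin d → ℤ)
    (pc : ℝ) : Prop :=
  pc ∈ Set.Ioo (0 : ℝ) 1 ∧
    (∀ p, 0 ≤ p → p < pc → P p (LIP α η) = 0) ∧
    (∀ p, pc < p → p ≤ 1 → P p (LIP α η) = 1)

/-- The canonical direction vector `η ∈ {-1,0,1}^d` with `k` entries equal to `1`; the
critical probability `p_L(α,d,η)` depends on `η` only through `k = ‖η‖₁`, and
`p_L(α,d,k)` denotes the common value. -/
def etaK (d k : ℕ) : Fin d → ℤ := fun i => if (i : ℕ) < k then 1 else 0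

/-!
In the coordinates `(x, F x - x)` the Lipschitz functions `F` become paths which descend by `0`, `1`
or `2` rows at each step, and the tilted plane becomes the line of slope `-δ`, where `δ = 1 - α`.
Let `q` be the density of the closed sites.

If `q > δ`, then an open path stays below the greedy path started at the same height, which descends
by one row at each closed site that it meets. By Chernoff's bound the greedy path descends at rate
`q`, so it eventually crosses every line of slope `-δ`.

If `q = ρ * δ` with `ρ < 1`, cut the rows into bands of a large odd width `W` and consider blocks
of about `W * (1 + γ) / δ` columns. By Chernoff's bound the greedy path is unlikely to leave the
band within such a block when `(1 - ρ) * (1 + γ) < -log ρ`, and for small `δ` it typically meets no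
vertical pair of closed sites, so that it is open. Steep lines over the next `W` columns then
connect it to the three neighbouring blocks on the right. Hence the good blocks form the same model
with density close to `1`, which contains an open path above the line of slope `-γ`. Its refinement
stays above the line of slope `-δ` on the right half-plane, and on the left half-plane it suffices
to take its maximum with an open path above the line of slope `-1`.
-/

open ProbabilityTheory

section Bernoulli

variable {ι κ γ : Type*} {p : ℝ}

lemma measureReal_singleton_false (ν : Measure Bool) [IsProbabilityMeasure ν] :
    ν.real {false} = 1 - ν.real {true} := by
  rw [← probReal_compl_eq_one_sub (by measurability)]
  congr 1
  ext b
  cases b <;> simp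

lemma measure_singleton_bool (ν : Measure Bool) [IsProbabilityMeasure ν] (b : Bool) :
    ν {b} = if b then ENNReal.ofReal (ν.real {true}) else ENNReal.ofReal (1 - ν.real {true}) := by
  rw [← measureReal_singleton_false]
  cases b <;> simp

lemma isBernoulli_infinitePi (ν : Measure Bool) [IsProbabilityMeasure ν] :
    IsBernoulli (ν.real {true}) (Measure.infinitePi fun _ : ι => ν) := by
  refine ⟨inferInstance, fun s f => ?_⟩
  have hset : {ω : ι → Bool | ∀ x ∈ s, ω x = f x} = Set.pi s fun x => {f x} := by ext; simp
  rw [hset, Measure.infinitePi_pi _ (by measurability)]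
  exact Finset.prod_congr rfl fun x _ => measure_singleton_bool ν (f x)

lemma measure_map_restrict_singleton (μ : Measure (ι → Bool)) (s : Finset ι) (f : ι → Bool) :
    μ.map s.restrict {s.restrict f} = μ {ω | ∀ x ∈ s, ω x = f x} := by
  rw [Measure.map_apply (by fun_prop) (by measurability)]
  congr 1
  ext ω
  simp [funext_iff]

lemma IsBernoulli.unique {μ ν : Measure (ι → Bool)} (hμ : IsBernoulli p μ)
    (hν : IsBernoulli p ν) : μ = ν := by
  have := hμ.1
  refine IsProjectiveLimit.unique (P := fun s => μ.map s.restrict) (fun s => rfl) fun s => ?_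
  refine Measure.ext_of_singleton fun f => ?_
  obtain ⟨f, rfl⟩ : ∃ f' : ι → Bool, s.restrict f' = f :=
    ⟨Function.extend Subtype.val f fun _ => false, funext fun x =>
      Subtype.val_injective.extend_apply f _ x⟩
  rw [measure_map_restrict_singleton, measure_map_restrict_singleton, hμ.2, hν.2]

lemma IsBernoulli.exists_eq_infinitePi [Nonempty ι] {μ : Measure (ι → Bool)}
    (h : IsBernoulli p μ) : ∃ ν : Measure Bool, IsProbabilityMeasure ν ∧ ν.real {true} = p ∧
      μ = Measure.infinitePi fun _ => ν := by
  have := h.1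
  inhabit ι
  set ν := μ.map fun ω => ω default with hν
  have heval : Measurable fun ω : ι → Bool => ω default := measurable_pi_apply default
  have : IsProbabilityMeasure ν := Measure.isProbabilityMeasure_map heval.aemeasurable
  have hmass (b : Bool) : ν {b} = if b then ENNReal.ofReal p else ENNReal.ofReal (1 - p) := by
    rw [hν, Measure.map_apply heval (by measurability)]
    simpa [Set.preimage] using h.2 {default} fun _ => b
  have hp : ν.real {true} = p := by
    have htrue := hmass true
    have hfalse := hmass false
    rw [measure_singleton_bool] at htrue hfalse
    have h0 : 0 ≤ ν.real {true} := measureReal_nonneg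
    have h1 : ν.real {true} ≤ 1 := measureReal_le_one
    simp only [if_true, Bool.false_eq_true, if_false] at htrue hfalse
    rcases le_total 0 p with hp | hp
    · exact (ENNReal.ofReal_eq_ofReal_iff h0 hp).1 htrue
    · linarith [(ENNReal.ofReal_eq_ofReal_iff (by linarith) (by linarith)).1 hfalse]
  exact ⟨ν, inferInstance, hp, h.unique (hp ▸ isBernoulli_infinitePi ν)⟩

lemma IsBernoulli.mem_Icc [Nonempty ι] {μ : Measure (ι → Bool)} (h : IsBernoulli p μ) :
    p ∈ Set.Icc (0 : ℝ) 1 := by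
  obtain ⟨ν, _, rfl, -⟩ := h.exists_eq_infinitePi
  exact ⟨measureReal_nonneg, measureReal_le_one⟩

lemma IsBernoulli.measureReal_eq_false [Nonempty ι] {μ : Measure (ι → Bool)}
    (h : IsBernoulli p μ) (s : Finset ι) :
    μ.real {ω | ∀ x ∈ s, ω x = false} = (1 - p) ^ s.card := by
  simp [measureReal_def, h.2 s fun _ => false, h.mem_Icc.2]

lemma IsBernoulli.measureReal_exists_eq_false_le [Nonempty ι] {μ : Measure (ι → Bool)}
    (h : IsBernoulli p μ) (J : Finset κ) (A : κ → Finset ι) {n : ℕ}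
    (hA : ∀ j ∈ J, (A j).card = n) :
    μ.real {ω | ∃ j ∈ J, ∀ x ∈ A j, ω x = false} ≤ J.card * (1 - p) ^ n := by
  have hset : {ω : ι → Bool | ∃ j ∈ J, ∀ x ∈ A j, ω x = false} =
      ⋃ j ∈ J, {ω | ∀ x ∈ A j, ω x = false} := by ext; simp
  calc μ.real {ω | ∃ j ∈ J, ∀ x ∈ A j, ω x = false}
      ≤ ∑ j ∈ J, μ.real {ω | ∀ x ∈ A j, ω x = false} :=
        hset ▸ measureReal_biUnion_finset_le J _
    _ = J.card * (1 - p) ^ n := by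
        rw [Finset.sum_congr rfl fun j hj => by rw [h.measureReal_eq_false, hA j hj],
          Finset.sum_const, nsmul_eq_mul]

lemma IsBernoulli.map_comp [Nonempty ι] {μ : Measure (ι → Bool)} (h : IsBernoulli p μ)
    {e : κ → ι} (he : Function.Injective e) : IsBernoulli p (μ.map fun ω => ω ∘ e) := by
  obtain ⟨ν, _, rfl, rfl⟩ := h.exists_eq_infinitePi
  have hmap := Measure.map_infinitePi_infinitePi_of_inj (P := fun _ => ν) he
  exact hmap ▸ isBernoulli_infinitePi ν

lemma IsBernoulli.map_blocks [Nonempty ι] {μ : Measure (ι → Bool)} (hμ : IsBernoulli p μ)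
    {ν : Measure (γ → Bool)} (hν : IsBernoulli p ν) {τ : κ → γ → ι}
    (hτ : Function.Injective (Function.uncurry τ)) {g : (γ → Bool) → Bool} (hg : Measurable g) :
    IsBernoulli (ν.real {η | g η = true}) (μ.map fun ω s => g (ω ∘ τ s)) := by
  obtain ⟨ν₀, _, rfl, rfl⟩ := hμ.exists_eq_infinitePi
  obtain rfl := hν.unique (isBernoulli_infinitePi ν₀)
  have : IsProbabilityMeasure ((Measure.infinitePi fun _ : γ => ν₀).map g) :=
    Measure.isProbabilityMeasure_map hg.aemeasurable
  have hinj := Measure.map_infinitePi_infinitePi_of_inj (P := fun _ => ν₀) hτ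
  have hcurry := Measure.infinitePi_map_curry fun (_ : κ) (_ : γ) => ν₀
  have hpi := Measure.infinitePi_map_pi (μ := fun _ : κ => Measure.infinitePi fun _ : γ => ν₀)
    (f := fun _ => g) fun _ => hg
  rw [← hcurry, ← hinj, Measure.map_map (by fun_prop) (by fun_prop),
    Measure.map_map (by fun_prop) (by fun_prop)] at hpi
  have hbern := isBernoulli_infinitePi (ι := κ) ((Measure.infinitePi fun _ : γ => ν₀).map g)
  rw [map_measureReal_apply hg (by measurability), ← hpi] at hbern
  exact hbern

lemma measurable_of_dependsOn {β : Type*} [Nonempty β] [MeasurableSpace β] {s : Set ι}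
    (hs : s.Finite) {f : (ι → Bool) → β} (hf : DependsOn f s) : Measurable f := by
  have := hs.to_subtype
  obtain ⟨φ, rfl⟩ := dependsOn_iff_exists_comp.1 hf
  exact (measurable_of_finite φ).comp (by fun_prop)

lemma integrable_of_dependsOn {s : Set ι} (hs : s.Finite) {f : (ι → Bool) → ℝ}
    (hf : DependsOn f s) (μ : Measure (ι → Bool)) [IsFiniteMeasure μ] : Integrable f μ := by
  have := hs.to_subtype
  obtain ⟨φ, rfl⟩ := dependsOn_iff_exists_comp.1 hf
  exact Integrable.of_finite.comp_measurable (by fun_prop)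

lemma IsBernoulli.map_blocks_of_dependsOn [Nonempty ι] {μ : Measure (ι → Bool)}
    (hμ : IsBernoulli p μ) [Nonempty γ] {ν : Measure (γ → Bool)} (hν : IsBernoulli p ν) {T : Set γ}
    (hT : T.Finite) {τ : κ → γ → ι} (hτ : Set.InjOn (Function.uncurry τ) (Set.univ ×ˢ T))
    {g : (γ → Bool) → Bool} (hg : DependsOn g T) :
    IsBernoulli (ν.real {η | g η = true}) (μ.map fun ω s => g (ω ∘ τ s)) := by
  have := hT.to_subtype
  obtain ⟨φ, rfl⟩ := dependsOn_iff_exists_comp.1 hg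
  have hinj : Function.Injective (Function.uncurry fun s (c : T) => τ s c) := by
    rintro ⟨s, c⟩ ⟨s', c'⟩ heq
    have := @hτ (s, c) (by simp) (s', c') (by simp) heq
    simp_all [Subtype.ext_iff]
  have hblocks := hμ.map_blocks (hν.map_comp Subtype.val_injective) hinj (measurable_of_finite φ)
  rw [map_measureReal_apply (by fun_prop) (measurableSet_eq_fun (measurable_of_finite φ)
    measurable_const)] at hblocks
  exact hblocks

lemma IsBernoulli.integral_eval_mul [Nonempty ι] {μ : Measure (ι → Bool)} (hμ : IsBernoulli p μ)
    {i : ι} {s : Set ι} (hs : s.Finite) (hi : i ∉ s) {f : (ι → Bool) → ℝ} (hf : DependsOn f s)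
    (h : Bool → ℝ) :
    ∫ ω, h (ω i) * f ω ∂μ = (p * h true + (1 - p) * h false) * ∫ ω, f ω ∂μ := by
  obtain ⟨ν, _, rfl, rfl⟩ := hμ.exists_eq_infinitePi
  lift s to Finset ι using hs
  have hfm := measurable_of_dependsOn s.finite_toSet hf
  have heval : Measurable fun ω : ι → Bool => ω i := measurable_pi_apply i
  have hh : Measurable fun ω : ι → Bool => h (ω i) := (measurable_of_finite h).comp heval
  have hind : IndepFun (fun ω : ι → Bool => h (ω i)) f (Measure.infinitePi fun _ => ν) := by
    obtain ⟨φ, rfl⟩ := dependsOn_iff_exists_comp.1 hf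
    have hcoord := iIndepFun_infinitePi (P := fun _ : ι => ν) (X := fun _ ω => ω) (by fun_prop)
    exact (hcoord.indepFun_finset {i} s (by simpa using hi) (by fun_prop)).comp
      (φ := fun c => h (c ⟨i, by simp⟩)) (measurable_of_finite _) (measurable_of_finite φ)
  rw [hind.integral_fun_mul_eq_mul_integral hh.aestronglyMeasurable hfm.aestronglyMeasurable]
  have hmean : ∫ ω, h (ω i) ∂(Measure.infinitePi fun _ : ι => ν) = ∫ b, h b ∂ν := by
    rw [← integral_map heval.aemeasurable (measurable_of_finite h).aestronglyMeasurable,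
      Measure.infinitePi_map_eval]
  rw [hmean, integral_fintype Integrable.of_finite]
  simp [measureReal_singleton_false]

end Bernoulli

section Descents

/-- The site `(x, x + u)`, for `c = (x, u)`. In these coordinates the open Lipschitz functions
become the open descents. -/
def diag (c : ℤ × ℤ) : Site 1 := ![c.1, c.1 + c.2]

/-- Integer sequences which decrease by `0`, `1` or `2` at each step: Lipschitz functions seen in
the coordinates of `diag`. -/
def IsDescent (U : ℤ → ℤ) : Prop := ∀ x, U (x + 1) ∈ Set.Icc (U x - 2) (U x)

/-- The event that there is an open descent lying strictly above the line of slope `-δ`. -/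
def descentEvent (δ : ℝ) : Set (ℤ × ℤ → Bool) :=
  {ω | ∃ U, IsDescent U ∧ ∀ x, ω (x, U x) = true ∧ -(δ * x) < U x}

variable {α : ℝ} {U V : ℤ → ℤ}

lemma diag_injective : Function.Injective diag := by
  rintro ⟨x, u⟩ ⟨x', u'⟩ h
  have h0 : x = x' := congrFun h 0
  have h1 : x + u = x' + u' := congrFun h 1
  rw [Prod.mk.injEq]
  omega

lemma snoc_eq_diag (x : Fin 1 → ℤ) (y : ℤ) : (Fin.snoc x y : Site 1) = diag (x 0, y - x 0) := by
  ext i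
  fin_cases i
  · rfl
  · simp [diag, Fin.snoc]

lemma planeHt_etaK_one_lt_iff (x : Fin 1 → ℤ) (y : ℤ) :
    planeHt α (etaK 1 1) x < y ↔ -((1 - α) * x 0) < ((y - x 0 : ℤ) : ℝ) := by
  rw [planeHt, Int.floor_lt]
  simp only [etaK, Finset.univ_unique, Fin.default_eq_zero, Finset.sum_singleton]
  push_cast
  constructor <;> intro h <;> norm_num at h ⊢ <;> linarith

lemma isLipschitzFn_iff_isDescent {F : (Fin 1 → ℤ) → ℤ} :
    IsLipschitzFn F ↔ IsDescent fun x => F (fun _ => x) - x := by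
  constructor
  · intro hF x
    have := abs_le.1 (hF (fun _ => x + 1) (fun _ => x) (by simp))
    simp only [Set.mem_Icc]
    omega
  · intro hF x y hxy
    obtain ⟨x, rfl⟩ : ∃ a : ℤ, (fun _ => a) = x := ⟨x 0, by ext i; fin_cases i; rfl⟩
    obtain ⟨y, rfl⟩ : ∃ a : ℤ, (fun _ => a) = y := ⟨y 0, by ext i; fin_cases i; rfl⟩
    rw [Fin.sum_univ_one] at hxy
    dsimp only at hxy
    rw [abs_le]
    simp only [IsDescent, Set.mem_Icc] at hF
    obtain hxy | hxy := (abs_eq zero_le_one).1 hxy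
    · obtain rfl : x = y + 1 := by omega
      have := hF y
      omega
    · obtain rfl : y = x + 1 := by omega
      have := hF x
      omega

lemma mem_LIP_iff_comp_diag_mem_descentEvent {ω : Config 1} :
    ω ∈ LIP α (etaK 1 1) ↔ ω ∘ diag ∈ descentEvent (1 - α) := by
  constructor
  · rintro ⟨F, hF, h⟩
    refine ⟨_, isLipschitzFn_iff_isDescent.1 hF, fun x => ?_⟩
    have := h fun _ => x
    rwa [snoc_eq_diag, planeHt_etaK_one_lt_iff] at this
  · rintro ⟨U, hU, h⟩
    refine ⟨fun x => U (x 0) + x 0, isLipschitzFn_iff_isDescent.2 (by simpa using hU), fun x => ?_⟩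
    rw [snoc_eq_diag, planeHt_etaK_one_lt_iff, add_sub_cancel_right]
    exact h (x 0)

lemma IsDescent.max (hU : IsDescent U) (hV : IsDescent V) : IsDescent (U ⊔ V) := fun x => by
  have := hU x
  have := hV x
  simp only [Set.mem_Icc, Pi.sup_apply] at *
  omega

lemma IsDescent.mem_Icc (hU : IsDescent U) (x : ℤ) :
    U x ∈ Set.Icc (U 0 - 2 * |x|) (U 0 + 2 * |x|) := by
  induction x using Int.induction_on with
  | zero => simp
  | succ n ih =>
    have := hU n
    rw [abs_of_nonneg (by omega)] at ih ⊢
    rw [Set.mem_Icc] at *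
    omega
  | pred n ih =>
    have := hU (-n - 1)
    rw [sub_add_cancel] at this
    rw [abs_of_nonpos (by omega)] at ih ⊢
    rw [Set.mem_Icc] at *
    omega

/-- A compactness argument: for fixed `U 0` the relevant pairs `(ω, U)` form a compact set, of which
the event is a projection. -/
lemma measurableSet_descentEvent (δ : ℝ) : MeasurableSet (descentEvent δ) := by
  let K (k : ℤ) : Set ((ℤ × ℤ → Bool) × (ℤ → ℤ)) :=
    (Set.univ ×ˢ Set.univ.pi fun x => Set.Icc (k - 2 * |x|) (k + 2 * |x|)) ∩
      ⋂ x : ℤ, ({c | c.2 (x + 1) ∈ Set.Icc (c.2 x - 2) (c.2 x) ∧ -(δ * x) < c.2 x} ∩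
        ⋂ u : ℤ, {c | c.2 x ≠ u ∨ c.1 (x, u) = true})
  have hK (k : ℤ) : IsCompact (K k) := by
    refine (isCompact_univ.prod (isCompact_univ_pi fun x => isCompact_Icc)).inter_right ?_
    refine isClosed_iInter fun x => IsClosed.inter ?_ (isClosed_iInter fun u => ?_)
    · have hcont : Continuous fun c : (ℤ × ℤ → Bool) × (ℤ → ℤ) => (c.2 x, c.2 (x + 1)) := by
        fun_prop
      exact (isClosed_discrete {e : ℤ × ℤ | e.2 ∈ Set.Icc (e.1 - 2) e.1 ∧
        -(δ * x) < e.1}).preimage hcont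
    · have hcont : Continuous fun c : (ℤ × ℤ → Bool) × (ℤ → ℤ) => (c.2 x, c.1 (x, u)) := by
        fun_prop
      exact (isClosed_discrete {e : ℤ × Bool | e.1 ≠ u ∨ e.2 = true}).preimage hcont
  have hproj : descentEvent δ = ⋃ k, Prod.fst '' K k := by
    ext ω
    simp only [Set.mem_iUnion, Set.mem_image, Prod.exists, exists_and_right, exists_eq_right, K,
      Set.mem_inter_iff, Set.mem_iInter, Set.mem_prod, Set.mem_pi, Set.mem_univ, true_and,
      forall_const, Set.mem_ofPred_eq]
    constructor
    · rintro ⟨U, hU, h⟩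
      refine ⟨U 0, U, hU.mem_Icc, fun x => ⟨⟨hU x, (h x).2⟩, fun u => ?_⟩⟩
      exact or_iff_not_imp_left.2 fun hu => not_not.1 hu ▸ (h x).1
    · rintro ⟨k, U, -, h⟩
      exact ⟨U, fun x => (h x).1.1, fun x => ⟨by simpa using (h x).2 (U x), (h x).1.2⟩⟩
  rw [hproj]
  exact .iUnion fun k => ((hK k).image continuous_fst).isClosed.measurableSet

end Descents

section GreedyPath

/-- The number of descents, within `t` steps to the right of `(x, u)`, of the greedy path, which
stays in its row when the next site of the row is open and descends by one row otherwise. -/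
def drops (ω : ℤ × ℤ → Bool) : ℕ → ℤ → ℤ → ℕ
  | 0, _, _ => 0
  | t + 1, x, u =>
    if ω (x + 1, u) then drops ω t (x + 1) u else drops ω t (x + 1) (u - 1) + 1

variable {p δ : ℝ}

lemma dependsOn_drops (t : ℕ) (x u : ℤ) :
    DependsOn (drops · t x u) (Set.Ioc x (x + t) ×ˢ Set.Icc (u - t) u) := by
  intro ω ω' h
  induction t generalizing x u with
  | zero => rfl
  | succ t ih =>
    have hnext : ω (x + 1, u) = ω' (x + 1, u) :=
      h _ (by simp only [Set.mem_prod, Set.mem_Ioc, Set.mem_Icc]; omega)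
    have hdrops (v : ℤ) (hv : u - 1 ≤ v) (hvu : v ≤ u) :
        drops ω t (x + 1) v = drops ω' t (x + 1) v :=
      ih _ _ fun c hc => h c (by simp only [Set.mem_prod, Set.mem_Ioc, Set.mem_Icc] at *; omega)
    simp only [drops, hnext, hdrops u (by omega) le_rfl, hdrops (u - 1) le_rfl (by omega)]

lemma dependsOn_comp_drops {β : Type*} (f : ℕ → β) (t : ℕ) (x u : ℤ) :
    DependsOn (fun ω => f (drops ω t x u)) (Set.Ioc x (x + t) ×ˢ Set.Icc (u - t) u) :=
  fun _ _ h => congrArg f (dependsOn_drops t x u h)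

lemma IsBernoulli.mgf_drops {μ : Measure (ℤ × ℤ → Bool)} (h : IsBernoulli p μ) (s : ℝ) (t : ℕ)
    (x u : ℤ) : mgf (fun ω => (drops ω t x u : ℝ)) μ s = (p + (1 - p) * Real.exp s) ^ t := by
  have := h.1
  induction t generalizing x u with
  | zero => simp [drops, mgf]
  | succ t ih =>
    have hsplit (ω : ℤ × ℤ → Bool) : Real.exp (s * drops ω (t + 1) x u) =
        (if ω (x + 1, u) then 1 else 0) * Real.exp (s * drops ω t (x + 1) u) +
        (if ω (x + 1, u) then 0 else Real.exp s) * Real.exp (s * drops ω t (x + 1) (u - 1)) := by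
      by_cases hω : ω (x + 1, u)
      · simp [drops, hω]
      · simp [drops, hω, ← Real.exp_add, mul_add, add_comm]
    have hint (f : Bool → ℝ) (v : ℤ) :
        Integrable (fun ω => f (ω (x + 1, u)) * Real.exp (s * drops ω t (x + 1) v)) μ := by
      have hexp := integrable_of_dependsOn (Set.toFinite _)
        (dependsOn_comp_drops (fun n => Real.exp (s * n)) t (x + 1) v) μ
      obtain ⟨C, hC⟩ := (Set.finite_range fun b => ‖f b‖).bddAbove
      have hf : Measurable fun ω : ℤ × ℤ → Bool => f (ω (x + 1, u)) :=
        (measurable_of_finite f).comp (measurable_pi_apply _)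
      exact hexp.bdd_mul hf.aestronglyMeasurable (.of_forall fun ω => hC ⟨ω (x + 1, u), rfl⟩)
    have hmean (f : Bool → ℝ) (v : ℤ) :
        ∫ ω, f (ω (x + 1, u)) * Real.exp (s * drops ω t (x + 1) v) ∂μ =
          (p * f true + (1 - p) * f false) * (p + (1 - p) * Real.exp s) ^ t := by
      rw [← ih (x + 1) v]
      exact h.integral_eval_mul (Set.toFinite _) (by simp)
        (dependsOn_comp_drops (fun n => Real.exp (s * n)) t (x + 1) v) f
    simp only [mgf, hsplit]
    rw [integral_add (hint (fun b => if b then 1 else 0) u)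
      (hint (fun b => if b then 0 else Real.exp s) (u - 1)),
      hmean (fun b => if b then 1 else 0), hmean (fun b => if b then 0 else Real.exp s)]
    simp only [if_true, Bool.false_eq_true, if_false]
    ring

lemma IsBernoulli.exp_mul_mgf_drops_le {μ : Measure (ℤ × ℤ → Bool)} (h : IsBernoulli p μ)
    (s c : ℝ) (t : ℕ) (x u : ℤ) :
    Real.exp (-s * c) * mgf (fun ω => (drops ω t x u : ℝ)) μ s ≤
      Real.exp ((1 - p) * (Real.exp s - 1) * t - s * c) := by
  obtain ⟨hp0, hp1⟩ := h.mem_Icc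
  have hbase : p + (1 - p) * Real.exp s ≤ Real.exp ((1 - p) * (Real.exp s - 1)) := by
    linarith [Real.add_one_le_exp ((1 - p) * (Real.exp s - 1))]
  have : 0 ≤ p + (1 - p) * Real.exp s := by
    have := sub_nonneg.2 hp1
    positivity
  calc Real.exp (-s * c) * mgf (fun ω => (drops ω t x u : ℝ)) μ s
      ≤ Real.exp (-s * c) * Real.exp ((1 - p) * (Real.exp s - 1)) ^ t := by
        rw [h.mgf_drops]
        gcongr
    _ = Real.exp ((1 - p) * (Real.exp s - 1) * t - s * c) := by
        rw [← Real.exp_nat_mul, ← Real.exp_add]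
        ring_nf

lemma IsBernoulli.measureReal_le_drops_le {μ : Measure (ℤ × ℤ → Bool)} (h : IsBernoulli p μ)
    {s : ℝ} (hs : 0 ≤ s) (c : ℝ) (t : ℕ) (x u : ℤ) :
    μ.real {ω | c ≤ drops ω t x u} ≤ Real.exp ((1 - p) * (Real.exp s - 1) * t - s * c) := by
  have := h.1
  exact (measure_ge_le_exp_mul_mgf c hs (integrable_of_dependsOn (Set.toFinite _)
    (dependsOn_comp_drops (fun n => Real.exp (s * n)) t x u) μ)).trans
    (h.exp_mul_mgf_drops_le s c t x u)

lemma IsBernoulli.measureReal_drops_le_le {μ : Measure (ℤ × ℤ → Bool)} (h : IsBernoulli p μ)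
    {s : ℝ} (hs : s ≤ 0) (c : ℝ) (t : ℕ) (x u : ℤ) :
    μ.real {ω | drops ω t x u ≤ c} ≤ Real.exp ((1 - p) * (Real.exp s - 1) * t - s * c) := by
  have := h.1
  exact (measure_le_le_exp_mul_mgf c hs (integrable_of_dependsOn (Set.toFinite _)
    (dependsOn_comp_drops (fun n => Real.exp (s * n)) t x u) μ)).trans
    (h.exp_mul_mgf_drops_le s c t x u)

/-- The exponential rate at `s = log (δ / (1 - p))`, the optimal tilt, is positive. -/
lemma mul_log_div_add_sub_pos {q : ℝ} (hδ : 0 < δ) (hδq : δ < q) :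
    0 < δ * Real.log (δ / q) + (q - δ) := by
  have hne : q / δ ≠ 1 := (div_eq_one_iff_eq hδ.ne').not.2 hδq.ne'
  have hlog := Real.log_lt_sub_one_of_pos (div_pos (hδ.trans hδq) hδ) hne
  calc 0 < δ * (q / δ - 1 - Real.log (q / δ)) := mul_pos hδ (sub_pos.2 hlog)
    _ = δ * Real.log (δ / q) + (q - δ) := by
      rw [← inv_div δ q, Real.log_inv]
      field_simp
      ring

lemma IsBernoulli.measure_forall_drops_le_eq_zero {μ : Measure (ℤ × ℤ → Bool)}
    (h : IsBernoulli p μ) (hδ : 0 < δ) (hδp : δ < 1 - p) (k : ℝ) (x u : ℤ) :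
    μ {ω | ∀ t : ℕ, drops ω t x u ≤ k + δ * t} = 0 := by
  have := h.1
  set s := Real.log (δ / (1 - p)) with hs
  have hp : 0 < 1 - p := hδ.trans hδp
  have hs0 : s ≤ 0 := Real.log_nonpos (by positivity) (div_le_one_of_le₀ hδp.le hp.le)
  have hexp : (1 - p) * (Real.exp s - 1) = -(1 - p - δ) := by
    rw [Real.exp_log (div_pos hδ hp), mul_sub, mul_div_cancel₀ _ hp.ne']
    ring
  have hrate := mul_log_div_add_sub_pos hδ hδp
  rw [← hs] at hrate
  rw [← measureReal_eq_zero_iff]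
  refine le_antisymm (ge_of_tendsto' (x := atTop)
    (f := fun t : ℕ => Real.exp (-(s * k) - (δ * s + (1 - p - δ)) * t)) ?_ fun t => ?_)
    measureReal_nonneg
  · refine Real.tendsto_exp_atBot.comp
      (tendsto_atBot_add_const_left _ _ (tendsto_neg_atTop_atBot.comp ?_))
    exact tendsto_natCast_atTop_atTop.const_mul_atTop hrate
  · calc μ.real {ω | ∀ t : ℕ, drops ω t x u ≤ k + δ * t}
        ≤ μ.real {ω | drops ω t x u ≤ k + δ * t} := measureReal_mono fun ω hω => hω t
      _ ≤ Real.exp ((1 - p) * (Real.exp s - 1) * t - s * (k + δ * t)) :=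
        h.measureReal_drops_le_le hs0 _ t x u
      _ = Real.exp (-(s * k) - (δ * s + (1 - p - δ)) * t) := by
        rw [hexp]
        ring_nf

lemma IsDescent.le_sub_drops {ω : ℤ × ℤ → Bool} {U : ℤ → ℤ} (hU : IsDescent U)
    (hopen : ∀ x, ω (x, U x) = true) (t : ℕ) {x u : ℤ} (hu : U x ≤ u) :
    U (x + t) ≤ u - drops ω t x u := by
  induction t generalizing x u with
  | zero => simpa [drops] using hu
  | succ t ih =>
    rw [show x + ((t + 1 : ℕ) : ℤ) = x + 1 + t by push_cast; ring]
    have hstep := (hU x).2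
    by_cases hω : ω (x + 1, u) = true
    · simpa [drops, hω] using ih (hstep.trans hu)
    · have hne : U (x + 1) ≠ u := fun he => hω (he ▸ hopen (x + 1))
      have := ih (x := x + 1) (u := u - 1) (by omega)
      simp only [drops, hω, Bool.false_eq_true, if_false]
      omega

lemma IsBernoulli.measure_descentEvent_eq_zero {μ : Measure (ℤ × ℤ → Bool)}
    (h : IsBernoulli p μ) (hδ : 0 < δ) (hδp : δ < 1 - p) : μ (descentEvent δ) = 0 := by
  have hsub : descentEvent δ ⊆ ⋃ k : ℤ, {ω | ∀ t : ℕ, drops ω t 0 k ≤ k + δ * t} := by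
    rintro ω ⟨U, hU, hω⟩
    refine Set.mem_iUnion.2 ⟨U 0, fun t => ?_⟩
    have hlt := (hω t).2
    have hle : (U t : ℝ) ≤ U 0 - drops ω t 0 (U 0) := by
      exact_mod_cast zero_add (t : ℤ) ▸ hU.le_sub_drops (fun x => (hω x).1) t le_rfl
    push_cast at hlt
    linarith
  exact measure_mono_null hsub
    (measure_iUnion_null fun k => h.measure_forall_drops_le_eq_zero hδ hδp k 0 k)

end GreedyPath

section Paths

/-- A descent step from a site of `S`. Since only the source has to lie in `S`, concatenating
paths does not require anything of the final site. -/
def Step (S : Set (ℤ × ℤ)) (a b : ℤ × ℤ) : Prop :=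
  a ∈ S ∧ b.1 = a.1 + 1 ∧ b.2 ∈ Set.Icc (a.2 - 2) a.2

open Relation

variable {S T : Set (ℤ × ℤ)} {a b : ℤ × ℤ}

lemma reflTransGen_step_translate (c : ℤ × ℤ) (hST : ∀ x ∈ S, c + x ∈ T)
    (h : ReflTransGen (Step S) a b) : ReflTransGen (Step T) (c + a) (c + b) := by
  refine h.lift (c + ·) fun x y hxy => ?_
  obtain ⟨hx, hcol, hrow⟩ := hxy
  refine ⟨hST x hx, ?_⟩
  simp only [Set.mem_Icc, Prod.fst_add, Prod.snd_add] at *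
  omega

lemma exists_fun_of_reflTransGen_step (h : ReflTransGen (Step S) a b) :
    ∃ f : ℤ → ℤ, f a.1 = a.2 ∧ f b.1 = b.2 ∧ a.1 ≤ b.1 ∧ ∀ x ∈ Set.Ico a.1 b.1,
      (x, f x) ∈ S ∧ f (x + 1) ∈ Set.Icc (f x - 2) (f x) ∧ b.2 ≤ f x := by
  induction h using ReflTransGen.head_induction_on with
  | refl => exact ⟨fun _ => b.2, by simp⟩
  | @head a c hac _ ih =>
    obtain ⟨f, hfc, hfb, hle, hf⟩ := ih
    obtain ⟨ha, hcol, hrow⟩ := hac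
    have hcb : b.2 ≤ c.2 := by
      obtain hlt | heq := hle.lt_or_eq
      · exact hfc ▸ (hf c.1 ⟨le_rfl, hlt⟩).2.2
      · rw [← hfb, ← heq, hfc]
    refine ⟨Function.update f a.1 a.2, by simp, ?_, by omega, fun x hx => ?_⟩
    · rwa [Function.update_of_ne (by omega)]
    · have hax := hx.1
      rw [Function.update_of_ne (a := x + 1) (by omega)]
      obtain rfl | hne := eq_or_ne x a.1
      · rw [Function.update_self, ← hcol, hfc]
        exact ⟨ha, hrow, hcb.trans hrow.2⟩
      · rw [Function.update_of_ne hne]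
        exact hf x ⟨by omega, hx.2⟩

lemma exists_isDescent_of_reflTransGen_step {L : ℤ} (hL : 0 < L) {B : ℤ → ℤ}
    (h : ∀ i, ReflTransGen (Step S) (L * i, B i) (L * (i + 1), B (i + 1))) :
    ∃ U, IsDescent U ∧ ∀ x, (x, U x) ∈ S ∧ B (x / L + 1) ≤ U x := by
  choose f hleft hright _ hf using fun i => exists_fun_of_reflTransGen_step (h i)
  simp only at hleft hright hf
  have hmem (x : ℤ) : x ∈ Set.Ico (L * (x / L)) (L * (x / L + 1)) :=
    ⟨Int.mul_ediv_self_le hL.ne', by linarith [Int.lt_mul_ediv_self_add (x := x) hL]⟩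
  have hnext (x : ℤ) : f ((x + 1) / L) (x + 1) = f (x / L) (x + 1) := by
    obtain hlt | heq := (Int.add_one_le_iff.2 (hmem x).2).lt_or_eq
    · have hdiv : (x + 1) / L = x / L :=
        le_antisymm (Int.lt_add_one_iff.1 (Int.ediv_lt_of_lt_mul hL (by linarith)))
          (Int.ediv_le_ediv hL (by omega))
      rw [hdiv]
    · rw [heq, Int.mul_ediv_cancel_left _ hL.ne', hleft, hright]
  refine ⟨fun x => f (x / L) x, fun x => ?_, fun x => ?_⟩
  · dsimp only
    rw [hnext]
    exact (hf _ x (hmem x)).2.1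
  · exact ⟨(hf _ x (hmem x)).1, (hf _ x (hmem x)).2.2⟩

end Paths

section Blocks

open Relation

/-- The sites of a block, relative to its origin: a rectangle with `W` rows and `N` columns,
followed by the three connectors, which are the straight lines of slopes `0`, `-1` and `-2` over `W`
columns starting from the lowest row of the rectangle. -/
noncomputable def block (W N : ℕ) : Finset (ℤ × ℤ) :=
  Finset.Ico 0 (N : ℤ) ×ˢ Finset.Ioc (-W : ℤ) 0 ∪
    (Finset.Ico 0 (W : ℤ) ×ˢ Finset.Icc 0 2).image fun c => (N + c.1, -(W - 1) - c.2 * c.1)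

/-- The origin of the block of the coarse site `s`. A good block at `s` leads to the origins of the
blocks of its three coarse successors; the final `2 * W` lifts the resulting path strictly above the
tilted line. -/
def blockOrigin (W N : ℕ) (s : ℤ × ℤ) : ℤ × ℤ :=
  ((N + W) * s.1, W * s.2 - (W - 1) * s.1 + 2 * W)

/-- A block is good when open paths within it lead from its origin to the ends of the three
connectors. -/
def GoodBlock (W N : ℕ) (η : ℤ × ℤ → Bool) : Prop :=
  ∀ k ∈ Set.Icc (0 : ℤ) 2,
    ReflTransGen (Step {c | c ∈ block W N ∧ η c = true}) (0, 0) (N + W, -(W - 1) - k * W)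

open Classical in
/-- The renormalized configuration: a coarse site is open when its block is good. -/
noncomputable def coarse (W N : ℕ) (ω : ℤ × ℤ → Bool) (s : ℤ × ℤ) : Bool :=
  decide (GoodBlock W N (ω ∘ (blockOrigin W N s + ·)))

variable {W N : ℕ} {p γ δ : ℝ}

lemma mem_block {c : ℤ × ℤ} : c ∈ block W N ↔
    (0 ≤ c.1 ∧ c.1 < N ∧ -W < c.2 ∧ c.2 ≤ 0) ∨
      ∃ r k : ℤ, 0 ≤ r ∧ r < W ∧ 0 ≤ k ∧ k ≤ 2 ∧ c = (N + r, -(W - 1) - k * r) := by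
  simp only [block, Finset.mem_union, Finset.mem_product, Finset.mem_Ico, Finset.mem_Ioc,
    Finset.mem_image, Finset.mem_Icc, Prod.exists, and_assoc, eq_comm]

lemma fst_mem_Ico_of_mem_block {c : ℤ × ℤ} (hc : c ∈ block W N) :
    c.1 ∈ Set.Ico 0 ((N + W : ℕ) : ℤ) := by
  rw [Set.mem_Ico]
  obtain hc | ⟨r, k, hr0, hrW, -, -, rfl⟩ := mem_block.1 hc
  · omega
  · dsimp only
    omega

lemma eq_of_mem_block_of_dvd (hW : Odd W) {c c' : ℤ × ℤ} (hc : c ∈ block W N)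
    (hc' : c' ∈ block W N) (hfst : c.1 = c'.1) (hdvd : (W : ℤ) ∣ c.2 - c'.2) : c = c' := by
  refine Prod.ext hfst ?_
  obtain hc | ⟨r, k, hr0, hrW, hk0, hk2, rfl⟩ := mem_block.1 hc <;>
    obtain hc' | ⟨r', k', hr0', hrW', hk0', hk2', rfl⟩ := mem_block.1 hc'
  · exact sub_eq_zero.1 (Int.eq_zero_of_abs_lt_dvd hdvd (by rw [abs_lt]; omega))
  · dsimp only at *
    omega
  · dsimp only at *
    omega
  · obtain rfl : r = r' := by simpa using hfst
    obtain rfl | hne := eq_or_ne k k'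
    · rfl
    have hdvd_two : (W : ℤ) ∣ 2 * r := by
      replace hdvd : (W : ℤ) ∣ (k' - k) * r := by convert hdvd using 1; ring
      obtain hk | hk | hk | hk : k' - k = 1 ∨ k' - k = -1 ∨ k' - k = 2 ∨ k' - k = -2 := by omega
      all_goals rw [hk] at hdvd
      · exact (one_mul r ▸ hdvd).mul_left 2
      · exact (by simpa using hdvd : (W : ℤ) ∣ r).mul_left 2
      · exact hdvd
      · simpa using hdvd
    have hcoprime : IsCoprime (W : ℤ) 2 := by
      exact_mod_cast Nat.isCoprime_iff_coprime.2 hW.coprime_two_right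
    obtain rfl : r = 0 := Int.eq_zero_of_abs_lt_dvd (hcoprime.dvd_of_dvd_mul_left hdvd_two)
      (by rwa [abs_of_nonneg hr0])
    simp

/-- Blocks of coarse sites in the same column are translates by multiples of `W` rows. -/
lemma injOn_blockOrigin_add (hW : Odd W) :
    Set.InjOn (Function.uncurry fun s c => blockOrigin W N s + c) (Set.univ ×ˢ block W N) := by
  rintro ⟨s, c⟩ ⟨-, hc⟩ ⟨s', c'⟩ ⟨-, hc'⟩ h
  have hcol : (N + W) * s.1 + c.1 = (N + W) * s'.1 + c'.1 := congrArg Prod.fst h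
  have hrow : W * s.2 - (W - 1) * s.1 + 2 * W + c.2 = W * s'.2 - (W - 1) * s'.1 + 2 * W + c'.2 :=
    congrArg Prod.snd h
  have hdiv {d s : ℤ} (hd : d ∈ Set.Ico 0 ((N + W : ℕ) : ℤ)) : ((N + W) * s + d) / (N + W) = s := by
    have := hW.pos
    rw [add_comm, Int.add_mul_ediv_left _ _ (by omega), Int.ediv_eq_zero_of_lt hd.1
      (by exact_mod_cast hd.2), zero_add]
  have hs : s.1 = s'.1 := by
    rw [← hdiv (s := s.1) (fst_mem_Ico_of_mem_block hc), hcol, hdiv (fst_mem_Ico_of_mem_block hc')]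
  rw [hs] at hcol hrow
  obtain rfl := eq_of_mem_block_of_dvd hW hc hc' (by linarith) ⟨s'.2 - s.2, by linarith⟩
  have hW0 : (W : ℤ) ≠ 0 := by exact_mod_cast hW.pos.ne'
  exact Prod.ext (Prod.ext hs (mul_left_cancel₀ hW0 (by linarith))) rfl

open Classical in
lemma dependsOn_goodBlock (W N : ℕ) :
    DependsOn (fun η => decide (GoodBlock W N η)) (block W N : Set (ℤ × ℤ)) := by
  intro η η' h
  have hset : {c | c ∈ block W N ∧ η c = true} = {c | c ∈ block W N ∧ η' c = true} :=
    Set.ext fun c => and_congr_right fun hc => by rw [h c hc]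
  exact decide_eq_decide.2 (by rw [GoodBlock, GoodBlock, hset])

lemma measurable_coarse (W N : ℕ) : Measurable (coarse W N) := by
  have := measurable_of_dependsOn (block W N).finite_toSet (dependsOn_goodBlock W N)
  exact measurable_pi_lambda _ fun s => this.comp (by fun_prop)

lemma IsBernoulli.map_coarse {μ : Measure (ℤ × ℤ → Bool)} (h : IsBernoulli p μ) (hW : Odd W) :
    IsBernoulli (μ.real {η | GoodBlock W N η}) (μ.map (coarse W N)) := by
  have := h.map_blocks_of_dependsOn h (block W N).finite_toSet (injOn_blockOrigin_add hW)
    (dependsOn_goodBlock W N)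
  simp only [decide_eq_true_eq] at this
  exact this

lemma reflTransGen_of_coarse {ω : ℤ × ℤ → Bool} {s s' : ℤ × ℤ} (hs : coarse W N ω s = true)
    (hstep : Step Set.univ s s') :
    ReflTransGen (Step {c | ω c = true}) (blockOrigin W N s) (blockOrigin W N s') := by
  obtain ⟨-, hcol, hrow⟩ := hstep
  simp only [coarse, decide_eq_true_eq] at hs
  have hgood := hs (s.2 - s'.2) (by simp only [Set.mem_Icc] at *; omega)
  convert reflTransGen_step_translate (T := {c | ω c = true}) (blockOrigin W N s)
    (fun c hc => hc.2) hgood using 1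
  · simp [Prod.ext_iff]
  · ext
    · simp only [blockOrigin, Prod.fst_add, hcol]
      ring
    · simp only [blockOrigin, Prod.snd_add, hcol]
      ring

lemma exists_isDescent_of_coarse_mem_descentEvent (hW : 0 < W) (hγ : γ ≤ 1) (hδ : 0 ≤ δ)
    (htilt : W * γ + (W - 1) ≤ δ * (N + W)) {ω : ℤ × ℤ → Bool}
    (h : coarse W N ω ∈ descentEvent γ) :
    ∃ U, IsDescent U ∧ (∀ x, ω (x, U x) = true) ∧ ∀ x, 0 ≤ x → -(δ * x) < U x := by
  obtain ⟨V, hV, hgood⟩ := h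
  obtain ⟨U, hU, hbound⟩ := exists_isDescent_of_reflTransGen_step (S := {c | ω c = true})
    (L := N + W) (B := fun i => W * V i - (W - 1) * i + 2 * W) (by omega)
    fun i => reflTransGen_of_coarse (hgood i).1 (s' := (i + 1, V (i + 1))) ⟨trivial, rfl, hV i⟩
  refine ⟨U, hU, fun x => (hbound x).1, fun x hx => ?_⟩
  set i : ℤ := x / (N + W)
  have : (0 : ℝ) ≤ i := by exact_mod_cast Int.ediv_nonneg hx (by omega)
  have hix : ((N : ℝ) + W) * i ≤ x := by
    exact_mod_cast Int.mul_ediv_self_le (x := x) (k := N + W) (by omega)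
  have hUx : W * V (i + 1) - (W - 1) * (i + 1) + 2 * W ≤ (U x : ℝ) := by
    exact_mod_cast (hbound x).2
  have hVi := (hgood (i + 1)).2
  push_cast at hVi
  have hW0 : (0 : ℝ) < W := by exact_mod_cast hW
  calc -(δ * x) ≤ -(δ * (N + W) * i) := by
        rw [mul_assoc]
        gcongr
    _ ≤ -((W * γ + (W - 1)) * i) := by gcongr
    _ < -((W * γ + (W - 1)) * i) + (W * (1 - γ) + 1) := by
        have := mul_nonneg hW0.le (sub_nonneg.2 hγ)
        linarith
    _ = W * -(γ * (i + 1)) - (W - 1) * (i + 1) + 2 * W := by ring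
    _ ≤ W * V (i + 1) - (W - 1) * (i + 1) + 2 * W := by gcongr
    _ ≤ U x := hUx

lemma mem_descentEvent_of_coarse_mem_descentEvent (hW : 0 < W) (hγ : γ ≤ 1)
    (hδ : δ ∈ Set.Icc (0 : ℝ) 1) (htilt : W * γ + (W - 1) ≤ δ * (N + W)) {ω : ℤ × ℤ → Bool}
    (hflat : ω ∈ descentEvent 1) (h : coarse W N ω ∈ descentEvent γ) : ω ∈ descentEvent δ := by
  obtain ⟨U, hU, hUopen, hUδ⟩ :=
    exists_isDescent_of_coarse_mem_descentEvent hW hγ hδ.1 htilt h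
  obtain ⟨V, hV, hVω⟩ := hflat
  refine ⟨U ⊔ V, hU.max hV, fun x => ⟨?_, ?_⟩⟩
  · rw [Pi.sup_apply]
    obtain hmax | hmax := max_choice (U x) (V x) <;> rw [hmax]
    exacts [hUopen x, (hVω x).1]
  · rw [Pi.sup_apply, Int.cast_max, lt_max_iff]
    obtain hx | hx := le_total 0 x
    · exact Or.inl (hUδ x hx)
    · refine Or.inr (lt_of_le_of_lt ?_ (hVω x).2)
      have : (x : ℝ) ≤ 0 := by exact_mod_cast hx
      nlinarith [hδ.2]

end Blocks

section GoodBlocks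

open Relation

variable {p : ℝ} {W t : ℕ} {x u : ℤ} {S : Set (ℤ × ℤ)} {η : ℤ × ℤ → Bool}

lemma reflTransGen_step_of_line {k : ℤ} (hk : k ∈ Set.Icc 0 2) (n : ℕ)
    (hS : ∀ r : ℕ, r < n → (x + r, u - k * r) ∈ S) :
    ReflTransGen (Step S) (x, u) (x + n, u - k * n) := by
  induction n with
  | zero => simp [ReflTransGen.refl]
  | succ n ih =>
    refine (ih fun r hr => hS r (by omega)).tail ⟨hS n (by omega), by push_cast; ring, ?_⟩
    rw [Set.mem_Icc] at *
    push_cast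
    constructor <;> linarith

lemma reflTransGen_step_drops (hstart : η (x, u) = true)
    (hpair : ∀ a ∈ Set.Ioc x (x + t), ∀ b ∈ Set.Ioc (u - drops η t x u) u,
      η (a, b) = true ∨ η (a, b - 1) = true)
    (hS : ∀ a ∈ Set.Ico x (x + t), ∀ b ∈ Set.Icc (u - drops η t x u) u,
      η (a, b) = true → (a, b) ∈ S) :
    ReflTransGen (Step S) (x, u) (x + t, u - drops η t x u) := by
  induction t generalizing x u with
  | zero => simp [drops, ReflTransGen.refl]
  | succ t ih =>
    have hmem : (x, u) ∈ S := hS x (by simp) u (by simp) hstart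
    have hcol : x + (t + 1 : ℕ) = x + 1 + t := by push_cast; ring
    by_cases hω : η (x + 1, u) = true
    · have hdrops : drops η (t + 1) x u = drops η t (x + 1) u := by simp [drops, hω]
      rw [hdrops, hcol] at hpair hS ⊢
      exact (ih hω (fun a ha => hpair a ⟨by have := ha.1; omega, ha.2⟩)
        fun a ha => hS a ⟨by have := ha.1; omega, ha.2⟩).head ⟨hmem, rfl, by simp⟩
    · have hdrops : u - drops η (t + 1) x u = u - 1 - drops η t (x + 1) (u - 1) := by
        simp only [drops, hω, Bool.false_eq_true, if_false]
        push_cast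
        ring
      have hω' : η (x + 1, u - 1) = true :=
        (hpair (x + 1) (by simp) u (by simp [drops, hω])).resolve_left hω
      rw [hdrops, hcol] at hpair hS ⊢
      exact (ih hω' (fun a ha b hb => hpair a ⟨by have := ha.1; omega, ha.2⟩ b
          ⟨hb.1, by have := hb.2; omega⟩)
        fun a ha b hb => hS a ⟨by have := ha.1; omega, ha.2⟩ b
          ⟨hb.1, by have := hb.2; omega⟩).head ⟨hmem, rfl, by simp⟩

lemma goodBlock_of_drops_lt (hdrops : drops η t 0 0 < W)
    (hpair : ∀ a ∈ Set.Ioc 0 (t : ℤ), ∀ b ∈ Set.Ioc (-W : ℤ) 0,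
      η (a, b) = true ∨ η (a, b - 1) = true)
    (hstart : η (0, 0) = true) (hopen : ∀ c ∈ block W (t + W), (t : ℤ) ≤ c.1 → η c = true) :
    GoodBlock W (t + W) η := by
  intro k hk
  set S := {c | c ∈ block W (t + W) ∧ η c = true}
  set d := drops η t 0 0
  have hrect {a b : ℤ} (ha : 0 ≤ a) (haN : a < t + W) (hb : -W < b) (hb0 : b ≤ 0)
      (hab : t ≤ a ∨ η (a, b) = true) : (a, b) ∈ S := by
    have hblock : (a, b) ∈ block W (t + W) := mem_block.2 (by push_cast; omega)
    exact ⟨hblock, hab.elim (hopen (a, b) hblock) id⟩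
  have hgreedy : ReflTransGen (Step S) (0, 0) (t, -d) := by
    simpa using reflTransGen_step_drops (S := S) hstart
      (fun a ha b hb => hpair a (by simpa using ha) b ⟨by have := hb.1; omega, hb.2⟩)
      fun a ha b hb hab => hrect ha.1 (by have := ha.2; omega) (by have := hb.1; omega) hb.2
        (.inr hab)
  have hdown := reflTransGen_step_of_line (S := S) (x := t) (u := -d) (k := 1) (by simp) (W - 1 - d)
    fun r hr => hrect (by omega) (by omega) (by omega) (by omega) (.inl (by omega))
  have hflat := reflTransGen_step_of_line (S := S) (x := t + (W - 1 - d : ℕ))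
    (u := -d - 1 * (W - 1 - d : ℕ)) (k := 0) (by simp) (d + 1)
    fun r hr => hrect (by omega) (by omega) (by omega) (by omega) (.inl (by omega))
  have hconnector := reflTransGen_step_of_line (S := S) (x := t + W) (u := -(W - 1)) hk W
    fun r hr => by
      have hblock : ((t : ℤ) + W + r, -((W : ℤ) - 1) - k * r) ∈ block W (t + W) :=
        mem_block.2 (.inr ⟨r, k, by omega, by omega, hk.1, hk.2, by push_cast; rfl⟩)
      exact ⟨hblock, hopen _ hblock (by dsimp only; omega)⟩
  refine hgreedy.trans (hdown.trans ?_)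
  convert hflat.trans ?_ using 2
  convert hconnector using 2 <;> push_cast <;> omega

lemma card_filter_block_le (W t : ℕ) :
    {c ∈ block W (t + W) | (t : ℤ) ≤ c.1}.card ≤ W * W + W * 3 := by
  have hsub : {c ∈ block W (t + W) | (t : ℤ) ≤ c.1} ⊆
      Finset.Ico (t : ℤ) (t + W) ×ˢ Finset.Ioc (-W : ℤ) 0 ∪
        (Finset.Ico 0 (W : ℤ) ×ˢ Finset.Icc 0 2).image
          fun c => ((t + W : ℕ) + c.1, -(W - 1) - c.2 * c.1) := by
    intro c hc
    simp only [block, Finset.mem_filter, Finset.mem_union, Finset.mem_product, Finset.mem_Ico,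
      Finset.mem_Ioc] at hc ⊢
    exact hc.1.imp_left fun h => by push_cast at h; omega
  refine (Finset.card_le_card hsub).trans ((Finset.card_union_le _ _).trans ?_)
  refine add_le_add (by simp) (Finset.card_image_le.trans (by simp))

lemma drops_or_exists_eq_false_of_not_goodBlock (hη : ¬GoodBlock W (t + W) η) :
    W ≤ drops η t 0 0 ∨
      (∃ c ∈ Finset.Ioc 0 (t : ℤ) ×ˢ Finset.Ioc (-W : ℤ) 0,
        ∀ z ∈ ({c, (c.1, c.2 - 1)} : Finset (ℤ × ℤ)), η z = false) ∨
      ∃ c ∈ insert (0, 0) {c ∈ block W (t + W) | (t : ℤ) ≤ c.1},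
        ∀ z ∈ ({c} : Finset (ℤ × ℤ)), η z = false := by
  contrapose! hη
  simp only [Finset.mem_insert, Finset.mem_singleton, exists_eq_or_imp, exists_eq_left,
    forall_eq_or_imp, Finset.mem_filter, Finset.mem_product, Finset.mem_Ioc, ne_eq,
    Bool.not_eq_false, and_imp, Prod.forall] at hη
  obtain ⟨hdrops, hpair, hstart, hopen⟩ := hη
  refine goodBlock_of_drops_lt hdrops (fun a ha b hb => ?_) hstart
    fun c hc hct => hopen c.1 c.2 hc hct
  exact hpair a b ha.1 ha.2 hb.1 hb.2

lemma IsBernoulli.one_sub_le_measureReal_goodBlock {μ : Measure (ℤ × ℤ → Bool)}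
    (h : IsBernoulli p μ) {s : ℝ} (hs : 0 ≤ s) (W t : ℕ) :
    1 - (Real.exp ((1 - p) * (Real.exp s - 1) * t - s * W) + (t * W * (1 - p) ^ 2 +
      (W * W + W * 3 + 1) * (1 - p))) ≤ μ.real {η | GoodBlock W (t + W) η} := by
  have := h.1
  have hp := sub_nonneg.2 h.mem_Icc.2
  set J : Finset (ℤ × ℤ) := Finset.Ioc 0 (t : ℤ) ×ˢ Finset.Ioc (-W : ℤ) 0 with hJ
  set K : Finset (ℤ × ℤ) := insert (0, 0) {c ∈ block W (t + W) | (t : ℤ) ≤ c.1}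
  have hcover : Set.univ ⊆ {η | GoodBlock W (t + W) η} ∪ ({η | (W : ℝ) ≤ drops η t 0 0} ∪
      ({η | ∃ c ∈ J, ∀ z ∈ ({c, (c.1, c.2 - 1)} : Finset (ℤ × ℤ)), η z = false} ∪
        {η | ∃ c ∈ K, ∀ z ∈ ({c} : Finset (ℤ × ℤ)), η z = false})) := fun η _ =>
    or_iff_not_imp_left.2 fun hη =>
      (drops_or_exists_eq_false_of_not_goodBlock hη).imp_left (Nat.cast_le (α := ℝ)).2
  have hJcard : (J.card : ℝ) = t * W := by simp [hJ]
  have hKcard : (K.card : ℝ) ≤ W * W + W * 3 + 1 := by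
    exact_mod_cast (Finset.card_insert_le _ _).trans (by gcongr; exact card_filter_block_le W t)
  have hvertical := h.measureReal_exists_eq_false_le J (fun c => {c, (c.1, c.2 - 1)}) (n := 2)
    fun c _ => Finset.card_pair fun hc => by simp [Prod.ext_iff] at hc; omega
  have hsingle := h.measureReal_exists_eq_false_le K (fun c => {c}) fun c _ =>
    Finset.card_singleton c
  rw [hJcard] at hvertical
  rw [pow_one] at hsingle
  replace hsingle := hsingle.trans (mul_le_mul_of_nonneg_right hKcard hp)
  rw [sub_le_iff_le_add]
  calc 1 = μ.real Set.univ := probReal_univ.symm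
    _ ≤ _ := (measureReal_mono hcover).trans (measureReal_union_le _ _)
    _ ≤ _ := by
      gcongr
      exact (measureReal_union_le _ _).trans (add_le_add (h.measureReal_le_drops_le hs W t 0 0)
        ((measureReal_union_le _ _).trans (add_le_add hvertical hsingle)))

end GoodBlocks

section Parameters

variable {ρ γ δ κ θ : ℝ}

lemma exists_one_sub_mul_one_add_lt_neg_log (hρ : ρ ∈ Set.Ioo (0 : ℝ) 1) :
    ∃ γ ∈ Set.Ioo (0 : ℝ) 1, (1 - ρ) * (1 + γ) < -Real.log ρ := by
  have hlog := Real.log_lt_sub_one_of_pos hρ.1 hρ.2.ne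
  have hlt : 1 < -Real.log ρ / (1 - ρ) := (one_lt_div (sub_pos.2 hρ.2)).2 (by linarith)
  obtain ⟨c, hc1, hc⟩ := exists_between (lt_min (_root_.one_lt_two (α := ℝ)) hlt)
  obtain ⟨hc2, hclog⟩ := lt_min_iff.1 hc
  refine ⟨c - 1, ⟨by linarith, by linarith⟩, ?_⟩
  rw [lt_div_iff₀' (sub_pos.2 hρ.2)] at hclog
  rwa [add_sub_cancel]

/-- Here `s = -log ρ` is the optimal tilt for `W` descents in `W (1 + γ) / δ` steps as `γ → 0`. -/
lemma IsBernoulli.one_sub_le_measureReal_goodBlock_ceil (hρ : ρ ∈ Set.Ioo (0 : ℝ) 1)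
    (hγ : γ ∈ Set.Ioo (0 : ℝ) 1) (hδ : δ ∈ Set.Ioc (0 : ℝ) 1) {μ : Measure (ℤ × ℤ → Bool)}
    (h : IsBernoulli (1 - ρ * δ) μ) (W : ℕ) :
    1 - (Real.exp (δ - (-Real.log ρ - (1 - ρ) * (1 + γ)) * W) +
      (3 * W ^ 2 + 4 * W + 1) * δ) ≤ μ.real {η | GoodBlock W (⌈W * (1 + γ) / δ⌉₊ + W) η} := by
  obtain ⟨hρ0, hρ1⟩ := hρ
  obtain ⟨hγ0, hγ1⟩ := hγ
  obtain ⟨hδ0, hδ1⟩ := hδ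
  set t := ⌈W * (1 + γ) / δ⌉₊
  have htδ : δ * t ≤ W * (1 + γ) + δ := by
    have := (Nat.ceil_lt_add_one (a := W * (1 + γ) / δ) (by positivity)).le
    calc δ * t ≤ δ * (W * (1 + γ) / δ + 1) := by gcongr
      _ = W * (1 + γ) + δ := by field_simp
  have hexponent : ρ * δ * (ρ⁻¹ - 1) * t - -Real.log ρ * W ≤
      δ - (-Real.log ρ - (1 - ρ) * (1 + γ)) * W :=
    calc ρ * δ * (ρ⁻¹ - 1) * t - -Real.log ρ * W
        = (1 - ρ) * (δ * t) - -Real.log ρ * W := by field_simp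
      _ ≤ (1 - ρ) * (W * (1 + γ) + δ) - -Real.log ρ * W := by
        have := sub_nonneg.2 hρ1.le
        gcongr
      _ ≤ δ - (-Real.log ρ - (1 - ρ) * (1 + γ)) * W := by nlinarith
  have hρδ : ρ * δ ≤ δ := mul_le_of_le_one_left hδ0.le hρ1.le
  have hclosed : t * W * (ρ * δ) ^ 2 + (W * W + W * 3 + 1) * (ρ * δ) ≤
      (3 * W ^ 2 + 4 * W + 1) * δ :=
    calc t * W * (ρ * δ) ^ 2 + (W * W + W * 3 + 1) * (ρ * δ)
        ≤ t * W * δ ^ 2 + (W * W + W * 3 + 1) * δ := by gcongr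
      _ = δ * t * (W * δ) + (W * W + W * 3 + 1) * δ := by ring
      _ ≤ (W * (1 + 1) + 1) * (W * δ) + (W * W + W * 3 + 1) * δ := by
        have : δ * t ≤ W * (1 + 1) + 1 := htδ.trans (by gcongr)
        gcongr
      _ = (3 * W ^ 2 + 4 * W + 1) * δ := by ring
  have hgood := h.one_sub_le_measureReal_goodBlock
    (neg_nonneg.2 (Real.log_nonpos hρ0.le hρ1.le)) W t
  rw [_root_.sub_sub_cancel, Real.exp_neg, Real.exp_log hρ0] at hgood
  refine le_trans ?_ hgood
  gcongr

lemma exists_odd_eventually_exp_sub_add_lt (hκ : 0 < κ) (hθ : 0 < θ) :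
    ∃ W : ℕ, Odd W ∧ ∀ᶠ δ in nhds (0 : ℝ),
      Real.exp (δ - κ * W) + (3 * W ^ 2 + 4 * W + 1) * δ < θ := by
  have hexp : Tendsto (fun W : ℕ => Real.exp (-(κ * W))) atTop (nhds 0) :=
    Real.tendsto_exp_neg_atTop_nhds_zero.comp
      (tendsto_natCast_atTop_atTop.const_mul_atTop hκ)
  obtain ⟨W, hWθ, hW⟩ :=
    ((hexp.eventually (gt_mem_nhds hθ)).and_frequently Nat.frequently_odd).exists
  refine ⟨W, hW, ?_⟩
  have hcont : Continuous fun δ : ℝ => Real.exp (δ - κ * W) + (3 * W ^ 2 + 4 * W + 1) * δ := by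
    fun_prop
  exact (hcont.tendsto 0).eventually (gt_mem_nhds (by simpa using hWθ))

end Parameters

section CriticalValues

variable {P : ℝ → Measure (Config 1)} {p α γ δ pc : ℝ} {μ : Measure (ℤ × ℤ → Bool)}

lemma measure_descentEvent_eq_one_of_coarse [IsProbabilityMeasure μ] {W N : ℕ} (hW : 0 < W)
    (hγ : γ ≤ 1) (hδ : δ ∈ Set.Icc (0 : ℝ) 1) (htilt : W * γ + (W - 1) ≤ δ * (N + W))
    (hflat : μ (descentEvent 1) = 1) (hcoarse : μ.map (coarse W N) (descentEvent γ) = 1) :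
    μ (descentEvent δ) = 1 := by
  have hmeas := measurable_coarse W N
  rw [Measure.map_apply hmeas (measurableSet_descentEvent γ),
    ← mem_ae_iff_prob_eq_one (hmeas (measurableSet_descentEvent γ))] at hcoarse
  rw [← mem_ae_iff_prob_eq_one (measurableSet_descentEvent _)] at hflat ⊢
  filter_upwards [hflat, hcoarse] with ω hω hωcoarse
  exact mem_descentEvent_of_coarse_mem_descentEvent hW hγ hδ htilt hω hωcoarse

lemma eventually_exists_isBernoulli_of_descentEvent {ρ θ : ℝ} (hρ : ρ ∈ Set.Ioo (0 : ℝ) 1)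
    (hγ : γ ∈ Set.Ioo (0 : ℝ) 1) (hγρ : (1 - ρ) * (1 + γ) < -Real.log ρ) (hθ : 0 < θ) :
    ∀ᶠ δ in nhdsWithin 0 (Set.Ioi 0), ∀ μ : Measure (ℤ × ℤ → Bool),
      IsBernoulli (1 - ρ * δ) μ → μ (descentEvent 1) = 1 →
        ∃ (r : ℝ) (ν : Measure (ℤ × ℤ → Bool)), 1 - θ < r ∧ IsBernoulli r ν ∧
          (ν (descentEvent γ) = 1 → μ (descentEvent δ) = 1) := by
  obtain ⟨W, hW, hWθ⟩ := exists_odd_eventually_exp_sub_add_lt (sub_pos.2 hγρ) hθ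
  filter_upwards [hWθ.filter_mono nhdsWithin_le_nhds, Ioc_mem_nhdsGT one_pos]
    with δ hbad hδ μ h hflat
  have := h.1
  have hgood := h.one_sub_le_measureReal_goodBlock_ceil hρ hγ hδ W
  refine ⟨_, _, (sub_lt_sub_left hbad 1).trans_le hgood, h.map_coarse hW,
    measure_descentEvent_eq_one_of_coarse hW.pos hγ.2.le (Set.Ioc_subset_Icc_self hδ) ?_ hflat⟩
  have hceil := (div_le_iff₀' hδ.1).1 (Nat.le_ceil (W * (1 + γ) / δ))
  have hδW : 0 ≤ δ * W := mul_nonneg hδ.1.le W.cast_nonneg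
  push_cast
  linarith

lemma IsBernoulli.measure_LIP_eq_measure_descentEvent
    (hP : ∀ p ∈ Set.Icc (0 : ℝ) 1, IsBernoulli p (P p)) (h : IsBernoulli p μ) (α : ℝ) :
    P p (LIP α (etaK 1 1)) = μ (descentEvent (1 - α)) := by
  rw [h.unique ((hP p h.mem_Icc).map_comp diag_injective),
    Measure.map_apply (by fun_prop) (measurableSet_descentEvent _)]
  congr 1
  ext ω
  exact mem_LIP_iff_comp_diag_mem_descentEvent

lemma IsCriticalProb.one_sub_le (hpc : IsCriticalProb P α (etaK 1 1) pc)
    (hP : ∀ p ∈ Set.Icc (0 : ℝ) 1, IsBernoulli p (P p)) (hα : α < 1) : 1 - pc ≤ 1 - α := by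
  by_contra! hlt
  obtain ⟨p, hp, hpα⟩ := exists_between ((sub_lt_sub_iff_left 1).1 hlt)
  have hp1 : p ≤ 1 := (hpα.trans hα).le
  have hbern := (hP p ⟨hpc.1.1.le.trans hp.le, hp1⟩).map_comp diag_injective
  have hone := hpc.2.2 p hp hp1
  rw [hbern.measure_LIP_eq_measure_descentEvent hP,
    hbern.measure_descentEvent_eq_zero (sub_pos.2 hα) (sub_lt_sub_left hpα 1)] at hone
  exact zero_ne_one hone

lemma eventually_mul_one_sub_le_one_sub_criticalProb
    (hP : ∀ p ∈ Set.Icc (0 : ℝ) 1, IsBernoulli p (P p)) {pc : ℝ → ℝ}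
    (hpc : ∀ α ∈ Set.Ico (0 : ℝ) 1, IsCriticalProb P α (etaK 1 1) (pc α)) {ρ : ℝ}
    (hρ : ρ ∈ Set.Ioo (0 : ℝ) 1) :
    ∀ᶠ α in nhdsWithin 1 (Set.Iio 1), ρ * (1 - α) ≤ 1 - pc α := by
  obtain ⟨γ, hγ, hγρ⟩ := exists_one_sub_mul_one_add_lt_neg_log hρ
  have hpcγ := hpc (1 - γ) ⟨sub_nonneg.2 hγ.2.le, sub_lt_self 1 hγ.1⟩
  have hpc0 := hpc 0 ⟨le_rfl, one_pos⟩
  have hlim : Tendsto (fun α : ℝ => 1 - α) (nhdsWithin 1 (Set.Iio 1)) (nhdsWithin 0 (Set.Ioi 0)) :=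
    tendsto_nhdsWithin_iff.2 ⟨((continuous_const.sub continuous_id).tendsto' 1 0
      (sub_self 1)).mono_left nhdsWithin_le_nhds,
      eventually_mem_nhdsWithin.mono fun _ h => Set.mem_Ioi.2 (sub_pos.2 (Set.mem_Iio.1 h))⟩
  filter_upwards [hlim.eventually
    (eventually_exists_isBernoulli_of_descentEvent hρ hγ hγρ (sub_pos.2 hpcγ.1.2)),
    Ioo_mem_nhdsLT hpc0.1.2] with α hrenorm ⟨hpcα, hα1⟩
  have hα0 : 0 < α := hpc0.1.1.trans hpcα
  have hρα : ρ * (1 - α) < 1 - α := mul_lt_of_lt_one_left (sub_pos.2 hα1) hρ.2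
  have hρα0 : 0 < ρ * (1 - α) := mul_pos hρ.1 (sub_pos.2 hα1)
  have hbern := (hP (1 - ρ * (1 - α)) ⟨by linarith, by linarith⟩).map_comp diag_injective
  have hflat := hpc0.2.2 (1 - ρ * (1 - α)) (by linarith) (by linarith)
  rw [hbern.measure_LIP_eq_measure_descentEvent hP, sub_zero] at hflat
  obtain ⟨r, ν, hr, hν, hcoarse⟩ := hrenorm _ hbern hflat
  have hfine := hpcγ.2.2 r (by linarith) hν.mem_Icc.2
  rw [hν.measure_LIP_eq_measure_descentEvent hP, _root_.sub_sub_cancel] at hfine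
  by_contra! hlt
  have hzero := (hpc α ⟨hα0.le, hα1⟩).2.1 (1 - ρ * (1 - α)) (by linarith) (by linarith)
  rw [hbern.measure_LIP_eq_measure_descentEvent hP, hcoarse hfine] at hzero
  exact one_ne_zero hzero

end CriticalValues

/-- Exact asymptotics in dimension one:
`q_L(α,1,1) ∼ (1−α)` as `α → 1⁻`, i.e. `lim_{α→1⁻} q_L(α,1,1)/(1−α) = 1`. -/
theorem qL_dim_one_asymptotics
    (P : ℝ → Measure (Config 1)) (hP : ∀ p ∈ Set.Icc (0 : ℝ) 1, IsBernoulli p (P p))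
    (pc : ℝ → ℝ) (hpc : ∀ α ∈ Set.Ico (0 : ℝ) 1, IsCriticalProb P α (etaK 1 1) (pc α)) :
    Tendsto (fun α : ℝ => (1 - pc α) / (1 - α)) (nhdsWithin 1 (Set.Iio 1)) (nhds 1) := by
  refine tendsto_order.2 ⟨fun a ha => ?_, fun a ha => ?_⟩
  · obtain ⟨ρ, hρ, hρ1⟩ := exists_between (max_lt one_pos ha)
    obtain ⟨hρ0, haρ⟩ := max_lt_iff.1 hρ
    filter_upwards [eventually_mul_one_sub_le_one_sub_criticalProb hP hpc ⟨hρ0, hρ1⟩,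
      self_mem_nhdsWithin] with α hα hα1
    exact haρ.trans_le ((le_div_iff₀ (sub_pos.2 hα1)).2 hα)
  · filter_upwards [Ioo_mem_nhdsLT one_pos] with α hα
    exact ((div_le_one (sub_pos.2 hα.2)).2
      ((hpc α (Set.Ioo_subset_Ico_self hα)).one_sub_le hP hα.2)).trans_lt ha
end

section
/- Asymptotic upper bound for d → ∞: for every α ∈ [0,1) one has limsup_{d→∞} q_L(α,d,d) · d^{1/(1−α)} ≤ C(α), where for α ∈ (0,1) the constant is C(α) = θ^{1/(1−α)}/(e^θ − 1) with θ > 0 the unique solution of θ·e^θ/(e^θ − 1) = 1/(1−α), and C(0) = 1. -/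
open MeasureTheory Filter ENNReal

/-!
Let `s = 1 / (1 - α)` and `q = 1 - p`. A walker starts at or above an open Lipschitz surface,
climbs by one unit with every unit step and drops by one unit in every time slot. As long as it
meets only closed sites, it never gets below the surface, which climbs no faster and avoids closed
sites. If `M`
steps are taken in `N` slots, the height of the walker relative to the tilted plane changes by
`(1 - α) * M - N`. Hence, if from every site there is with probability at least `1 / 2` a closed
flight (a schedule of steps all of whose sites are closed) with `N ≥ (1 - α) * (M + 1) + 3`, the
walker almost surely gets below the plane, and there is no surface above it. Independence of the
successive attempts is ensured by a step in coordinate `0` after each of them: flights never move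
in that coordinate.

A closed flight is found by the second moment method. The first `T` sites of a flight determine the
`m ≈ s * T` steps taken there up to their order, out of `(d * T) ^ m` possibilities, so that
pairs of flights which share these sites contribute about
`q ^ (-T) * m! / (d * T) ^ m ≈ ((s / e) ^ s / (q * d ^ s)) ^ T` to the normalized second moment.
This is small as soon as `q * d ^ s > (s / e) ^ s`, and `(s / e) ^ s` is at most the constant of
the theorem.
-/

section

open Finset Real Topology ProbabilityTheory

theorem integrable_sum_indicator_one {Ω ι : Type*} [MeasurableSpace Ω] [Fintype ι]
    (μ : Measure Ω) [IsFiniteMeasure μ] {E : ι → Set Ω} (hE : ∀ i, MeasurableSet (E i)) :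
    Integrable (fun ω => ∑ i, (E i).indicator (1 : Ω → ℝ) ω) μ :=
  integrable_finsetSum _ fun i _ => (integrable_const 1).indicator (hE i)

theorem integral_sum_indicator_one {Ω ι : Type*} [MeasurableSpace Ω] [Fintype ι]
    (μ : Measure Ω) [IsFiniteMeasure μ] {E : ι → Set Ω} (hE : ∀ i, MeasurableSet (E i)) :
    ∫ ω, ∑ i, (E i).indicator (1 : Ω → ℝ) ω ∂μ = ∑ i, μ.real (E i) := by
  rw [integral_finsetSum _ fun i _ => (integrable_const 1).indicator (hE i)]
  simp only [integral_indicator_one, hE]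

theorem sq_sum_indicator_one_sub {Ω ι : Type*} [Fintype ι] (E : ι → Set Ω) (t : ℝ) (ω : Ω) :
    (∑ i, (E i).indicator 1 ω - t * (⋃ i, E i).indicator 1 ω) ^ 2 =
      t * t * (⋃ i, E i).indicator 1 ω - 2 * t * ∑ i, (E i).indicator 1 ω +
        ∑ ij : ι × ι, (E ij.1 ∩ E ij.2).indicator (1 : Ω → ℝ) ω := by
  have sq_sum : (∑ i, (E i).indicator 1 ω) ^ 2 =
      ∑ ij : ι × ι, (E ij.1 ∩ E ij.2).indicator (1 : Ω → ℝ) ω := by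
    simp only [sq, sum_mul_sum, Set.inter_indicator_one, Pi.mul_apply, Fintype.sum_prod_type]
  rw [← sq_sum]
  by_cases hω : ω ∈ ⋃ i, E i
  · rw [Set.indicator_of_mem hω, Pi.one_apply]
    ring
  · have : ∑ i, (E i).indicator (1 : Ω → ℝ) ω = 0 := sum_eq_zero fun i _ =>
      Set.indicator_of_notMem (fun hi => hω (Set.mem_iUnion_of_mem i hi)) _
    simp [Set.indicator_of_notMem hω, this]

/-- **Chung–Erdős inequality**. -/
theorem sq_sum_measureReal_le_measureReal_iUnion_mul {Ω ι : Type*} [MeasurableSpace Ω] [Fintype ι]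
    (μ : Measure Ω) [IsFiniteMeasure μ] {E : ι → Set Ω} (hE : ∀ i, MeasurableSet (E i)) :
    (∑ i, μ.real (E i)) ^ 2 ≤ μ.real (⋃ i, E i) * ∑ i, ∑ j, μ.real (E i ∩ E j) := by
  set U := ⋃ i, E i
  have hU : MeasurableSet U := .iUnion hE
  have hpair (ij : ι × ι) : MeasurableSet (E ij.1 ∩ E ij.2) := (hE ij.1).inter (hE ij.2)
  let S : Ω → ℝ := fun ω => ∑ i, (E i).indicator 1 ω
  have quadratic_nonneg (t : ℝ) : 0 ≤ μ.real U * (t * t)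
      + -2 * (∑ i, μ.real (E i)) * t + ∑ ij : ι × ι, μ.real (E ij.1 ∩ E ij.2) := by
    have hUint : Integrable (fun ω => t * t * U.indicator (1 : Ω → ℝ) ω) μ :=
      ((integrable_const 1).indicator hU).const_mul _
    have hSint : Integrable (fun ω => 2 * t * S ω) μ :=
      (integrable_sum_indicator_one μ hE).const_mul _
    have hdiff : Integrable (fun ω => t * t * U.indicator (1 : Ω → ℝ) ω - 2 * t * S ω) μ :=
      hUint.sub hSint
    calc 0 ≤ ∫ ω, (S ω - t * U.indicator 1 ω) ^ 2 ∂μ := integral_nonneg fun ω => sq_nonneg _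
      _ = t * t * μ.real U - 2 * t * ∑ i, μ.real (E i)
            + ∑ ij : ι × ι, μ.real (E ij.1 ∩ E ij.2) := by
        simp only [S, U, sq_sum_indicator_one_sub E t]
        rw [integral_add hdiff (integrable_sum_indicator_one μ hpair),
          integral_sub hUint hSint, integral_const_mul, integral_const_mul,
          integral_indicator_one hU, integral_sum_indicator_one μ hE,
          integral_sum_indicator_one μ hpair]
      _ = _ := by ring
  have := discrim_le_zero quadratic_nonneg
  rw [discrim, Fintype.sum_prod_type] at this
  linarith

theorem measurableSet_cylinderEvents_forall_lt {ι : Type*} {S : Set ι} {y : ℕ → ι}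
    (hy : ∀ k, y k ∈ S) (N : ℕ) :
    MeasurableSet[cylinderEvents S] {ω : ι → Bool | ∀ k < N, ω (y k) = false} := by
  have closed (k : ℕ) : MeasurableSet[cylinderEvents S] {ω : ι → Bool | ω (y k) = false} :=
    measurable_cylinderEvent_apply (X := fun _ => Bool) (hy k) (measurableSet_singleton false)
  simp only [Set.ofPred_forall]
  exact .iInter fun k => .iInter fun _ => closed k

namespace IsBernoulli

variable {ι : Type*} {p : ℝ} {P : Measure (ι → Bool)}

theorem measureReal_forall_eq_false (hP : IsBernoulli p P) (hp : p ≤ 1) (s : Finset ι) :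
    P.real {ω | ∀ x ∈ s, ω x = false} = (1 - p) ^ s.card := by
  have := hP.2 s (fun _ => false)
  simp only [Bool.false_eq_true, if_false, prod_const] at this
  rw [Measure.real, this, ENNReal.toReal_pow, ENNReal.toReal_ofReal (by linarith)]

theorem iIndepFun_apply (hP : IsBernoulli p P) : iIndepFun (fun i (ω : ι → Bool) => ω i) P := by
  have := hP.1
  refine iIndepFun_iff_finset.2 fun s => (iIndepFun_iff_map_fun_eq_pi_map fun i =>
    (measurable_pi_apply i.1).aemeasurable).2 (Measure.ext_of_singleton fun a => ?_)
  classical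
  let f : ι → Bool := fun x => if hx : x ∈ s then a ⟨x, hx⟩ else false
  have f_coe (x : s) : f x = a x := dif_pos x.2
  have marginal (x : s) : P.map (fun ω => ω x.1) {a x}
      = if f x then ENNReal.ofReal p else ENNReal.ofReal (1 - p) := by
    rw [Measure.map_apply (measurable_pi_apply _) (measurableSet_singleton _)]
    simpa [f_coe, Set.preimage] using hP.2 {x.1} f
  have preimage_singleton :
      (fun (ω : ι → Bool) (i : s) => ω i) ⁻¹' {a} = {ω | ∀ x ∈ s, ω x = f x} := by
    ext ω
    simp +contextual [funext_iff, f]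
  calc P.map (fun ω (i : s) => ω i) {a}
      = P {ω | ∀ x ∈ s, ω x = f x} := by
        rw [Measure.map_apply (by fun_prop) (measurableSet_singleton _), preimage_singleton]
    _ = ∏ x : s, P.map (fun ω => ω x.1) {a x} := by
        simp only [marginal, hP.2]
        exact (prod_coe_sort s _).symm
    _ = Measure.pi (fun x : s => P.map fun ω => ω x.1) {a} := (Measure.pi_singleton _ _).symm

theorem measureReal_inter (hP : IsBernoulli p P) {S T : Set ι} (hST : Disjoint S T)
    {A B : Set (ι → Bool)} (hA : MeasurableSet[cylinderEvents S] A)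
    (hB : MeasurableSet[cylinderEvents T] B) : P.real (A ∩ B) = P.real A * P.real B := by
  have hind := indep_iSup_of_disjoint (fun i => (measurable_pi_apply i).comap_le)
    hP.iIndepFun_apply hST
  rw [Measure.real, (Indep_iff _ _ _).1 hind A B hA hB, ENNReal.toReal_mul]
  rfl

end IsBernoulli

/-! ### Second moment method for paths -/

theorem count_add_count_not (p : ℕ → Prop) [DecidablePred p] (n : ℕ) :
    Nat.count p n + Nat.count (fun k => ¬p k) n = n := by
  simp [Nat.count_eq_card_filter_range, card_filter_add_card_filter_not]

theorem inv_pow_count_le (p : ℕ → Prop) [DecidablePred p] {q : ℝ} (hq : 0 < q) (N : ℕ) :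
    q⁻¹ ^ Nat.count p N ≤ 1 + ∑ b ∈ range N,
      if p b then q⁻¹ ^ (b + 1) * q ^ Nat.count (fun k => ¬p k) b else 0 := by
  induction N with
  | zero => simp
  | succ N ih =>
    rw [sum_range_succ, Nat.count_succ]
    by_cases hp : p N
    · have last_term : q⁻¹ ^ (Nat.count p N + 1)
          = q⁻¹ ^ (N + 1) * q ^ Nat.count (fun k => ¬p k) N := by
        have := count_add_count_not p N
        rw [show N + 1 = Nat.count p N + 1 + Nat.count (fun k => ¬p k) N by lia,
          pow_add _ (Nat.count p N + 1), mul_assoc, ← mul_pow, inv_mul_cancel₀ hq.ne', one_pow,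
          mul_one]
      have : 0 ≤ q⁻¹ ^ Nat.count p N := by positivity
      rw [if_pos hp, if_pos hp, last_term]
      linarith
    · simpa [hp] using ih

theorem pow_count_not_succ (p : ℕ → Prop) [DecidablePred p] (q : ℝ) (n : ℕ) :
    q ^ Nat.count (fun k => ¬p k) (n + 1)
      = (if p n then 1 else q) * q ^ Nat.count (fun k => ¬p k) n := by
  rw [Nat.count_succ, pow_add, mul_comm]
  split_ifs <;> simp

theorem sum_ite_eq_one_le {β : Type*} [DecidableEq β] {q Q : ℝ} (hq : 0 ≤ q) (T : Finset β) (x : β)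
    (hT : (#T : ℝ) ≤ Q) : ∑ y ∈ T, (if y = x then 1 else q) ≤ 1 + Q * q :=
  calc ∑ y ∈ T, (if y = x then 1 else q)
      ≤ ∑ y ∈ T, ((if y = x then 1 else 0) + q) := by
        gcongr with y
        split_ifs <;> linarith
    _ = (if x ∈ T then 1 else 0) + #T * q := by simp [sum_add_distrib]
    _ ≤ 1 + Q * q := by
        gcongr
        split_ifs <;> norm_num

section Trajectories

variable {Φ β : Type*} [DecidableEq β] {Y : Φ → ℕ → β} {q Q : ℝ}

/- Fibre `S` over the position just before `k`: each position of a trajectory at time `k` has at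
most `Q` predecessors, one of which agrees with `x` and is not discounted. -/
theorem sum_pow_count_ne_le {B : ℝ} {b : ℕ} (x : ℕ → β) (hq : 0 ≤ q) (hQ : 0 ≤ Q) (hB : 0 ≤ B)
    (hpred : ∀ k z, ∀ S : Finset Φ, (∀ φ ∈ S, Y φ (k + 1) = z) → (#(S.image (Y · k)) : ℝ) ≤ Q)
    (hcard : ∀ S : Finset Φ, (∀ φ ∈ S, ∀ ψ ∈ S, Set.EqOn (Y φ) (Y ψ) (Set.Iic b)) → (#S : ℝ) ≤ B)
    {k : ℕ} (hk : k ≤ b) (S : Finset Φ)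
    (hS : ∀ φ ∈ S, ∀ ψ ∈ S, Set.EqOn (Y φ) (Y ψ) (Set.Icc k b)) :
    ∑ φ ∈ S, q ^ Nat.count (fun j => ¬Y φ j = x j) k ≤ (1 + Q * q) ^ k * B := by
  classical
  induction k generalizing S with
  | zero => simpa using hcard S fun φ hφ ψ hψ j hj => hS φ hφ ψ hψ ⟨j.zero_le, hj⟩
  | succ k ih =>
    have fiber_le (y : β) : ∑ φ ∈ S with Y φ k = y, q ^ Nat.count (fun j => ¬Y φ j = x j) (k + 1)
        ≤ (if y = x k then 1 else q) * ((1 + Q * q) ^ k * B) := by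
      have pinned (φ) (hφ : φ ∈ S.filter (Y · k = y)) (ψ) (hψ : ψ ∈ S.filter (Y · k = y)) :
          Set.EqOn (Y φ) (Y ψ) (Set.Icc k b) := by
        rw [mem_filter] at hφ hψ
        rintro j ⟨hkj, hjb⟩
        rcases hkj.eq_or_lt with rfl | hlt
        · exact hφ.2.trans hψ.2.symm
        · exact hS φ hφ.1 ψ hψ.1 ⟨hlt, hjb⟩
      calc ∑ φ ∈ S with Y φ k = y, q ^ Nat.count (fun j => ¬Y φ j = x j) (k + 1)
          = (if y = x k then 1 else q) *
              ∑ φ ∈ S with Y φ k = y, q ^ Nat.count (fun j => ¬Y φ j = x j) k := by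
            rw [mul_sum]
            exact sum_congr rfl fun φ hφ => by rw [pow_count_not_succ, (mem_filter.1 hφ).2]
        _ ≤ _ := mul_le_mul_of_nonneg_left (ih (by lia) _ pinned) (by split_ifs <;> linarith)
    have card_pred_le : (#(S.image (Y · k)) : ℝ) ≤ Q := by
      rcases S.eq_empty_or_nonempty with rfl | ⟨φ₀, h₀⟩
      · simpa using hQ
      · exact hpred k (Y φ₀ (k + 1)) S fun φ hφ => hS φ hφ φ₀ h₀ ⟨le_rfl, hk⟩
    calc ∑ φ ∈ S, q ^ Nat.count (fun j => ¬Y φ j = x j) (k + 1)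
        = ∑ y ∈ S.image (Y · k),
            ∑ φ ∈ S with Y φ k = y, q ^ Nat.count (fun j => ¬Y φ j = x j) (k + 1) :=
          (sum_fiberwise_of_maps_to (fun φ hφ => mem_image_of_mem (Y · k) hφ) _).symm
      _ ≤ ∑ y ∈ S.image (Y · k), (if y = x k then 1 else q) * ((1 + Q * q) ^ k * B) :=
          sum_le_sum fun y _ => fiber_le y
      _ ≤ (1 + Q * q) * ((1 + Q * q) ^ k * B) := by
          rw [← sum_mul]
          gcongr
          exact sum_ite_eq_one_le hq _ _ card_pred_le
      _ = (1 + Q * q) ^ (k + 1) * B := by ring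

theorem sum_inv_pow_count_eq_le [Fintype Φ] {B : ℕ → ℝ} (x : ℕ → β) (hq : 0 < q) (hQ : 0 ≤ Q)
    (hB : ∀ b, 0 ≤ B b)
    (hpred : ∀ k z, ∀ S : Finset Φ, (∀ φ ∈ S, Y φ (k + 1) = z) → (#(S.image (Y · k)) : ℝ) ≤ Q)
    (hcard : ∀ b, ∀ S : Finset Φ,
      (∀ φ ∈ S, ∀ ψ ∈ S, Set.EqOn (Y φ) (Y ψ) (Set.Iic b)) → (#S : ℝ) ≤ B b) (N : ℕ) :
    ∑ φ, q⁻¹ ^ Nat.count (fun k => Y φ k = x k) N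
      ≤ Fintype.card Φ + ∑ b ∈ range N, q⁻¹ ^ (b + 1) * ((1 + Q * q) ^ b * B b) :=
  calc ∑ φ, q⁻¹ ^ Nat.count (fun k => Y φ k = x k) N
      ≤ ∑ φ : Φ, (1 + ∑ b ∈ range N, if Y φ b = x b then
          q⁻¹ ^ (b + 1) * q ^ Nat.count (fun j => ¬Y φ j = x j) b else 0) :=
        sum_le_sum fun φ _ => inv_pow_count_le _ hq N
    _ = Fintype.card Φ + ∑ b ∈ range N, q⁻¹ ^ (b + 1) *
          ∑ φ with Y φ b = x b, q ^ Nat.count (fun j => ¬Y φ j = x j) b := by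
        rw [sum_add_distrib, sum_comm]
        simp [← sum_filter, mul_sum]
    _ ≤ _ := by
        gcongr with b
        refine sum_pow_count_ne_le x hq.le hQ (hB b) hpred (hcard b) le_rfl _ ?_
        rintro φ hφ ψ hψ j ⟨hbj, hjb⟩
        obtain rfl : j = b := le_antisymm hjb hbj
        exact (mem_filter.1 hφ).2.trans (mem_filter.1 hψ).2.symm

end Trajectories

section SecondMoment

variable {Φ β ι : Type*} {N : ℕ} {p : ℝ} {P : Measure (ι → Bool)} {e : ℕ → β → ι}

theorem IsBernoulli.measureReal_path_inter_path [DecidableEq β] (hP : IsBernoulli p P) (hp : p < 1)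
    (he : Function.Injective2 e) (y z : ℕ → β) :
    P.real ({ω | ∀ k < N, ω (e k (y k)) = false} ∩ {ω | ∀ k < N, ω (e k (z k)) = false})
      = (1 - p) ^ (2 * N) * (1 - p)⁻¹ ^ Nat.count (fun k => z k = y k) N := by
  classical
  let path (y : ℕ → β) : Finset ι := (range N).image fun k => e k (y k)
  have injective_site (y : ℕ → β) : Function.Injective fun k => e k (y k) :=
    fun k l h => (he h).1
  have card_path (y : ℕ → β) : #(path y) = N := by
    rw [card_image_of_injective _ (injective_site y), card_range]
  have card_inter : #(path y ∩ path z) = Nat.count (fun k => z k = y k) N := by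
    have : path y ∩ path z = ((range N).filter fun k => z k = y k).image fun k => e k (z k) := by
      ext i
      simp only [path, mem_inter, mem_image, mem_range, mem_filter]
      constructor
      · rintro ⟨⟨k, hk, rfl⟩, l, hl, h⟩
        obtain ⟨rfl, hzy⟩ := he h
        exact ⟨l, ⟨hl, hzy⟩, h⟩
      · rintro ⟨k, ⟨hk, hzy⟩, rfl⟩
        exact ⟨⟨k, hk, by rw [hzy]⟩, k, hk, rfl⟩
    rw [this, card_image_of_injective _ (injective_site z), Nat.count_eq_card_filter_range]
  have inter_eq : {ω : ι → Bool | ∀ k < N, ω (e k (y k)) = false} ∩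
      {ω | ∀ k < N, ω (e k (z k)) = false} = {ω | ∀ i ∈ path y ∪ path z, ω i = false} := by
    ext ω
    simp [path, or_imp, forall_and]
  have card_union := card_union_add_card_inter (path y) (path z)
  rw [card_path, card_path, card_inter, ← two_mul] at card_union
  rw [inter_eq, hP.measureReal_forall_eq_false hp.le, ← card_union, pow_add, mul_assoc, ← mul_pow,
    mul_inv_cancel₀ (by linarith), one_pow, mul_one]

theorem IsBernoulli.measureReal_path (hP : IsBernoulli p P) (hp : p < 1)
    (he : Function.Injective2 e) (y : ℕ → β) :
    P.real {ω | ∀ k < N, ω (e k (y k)) = false} = (1 - p) ^ N := by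
  classical
  have := hP.measureReal_path_inter_path hp he y y (N := N)
  rw [Set.inter_self] at this
  rw [this]
  simp [two_mul, pow_add, (sub_pos.2 hp).ne']

theorem IsBernoulli.inv_le_measureReal_iUnion_path [DecidableEq β] [Fintype Φ] [Nonempty Φ]
    (hP : IsBernoulli p P) (hp : p < 1) (he : Function.Injective2 e) {Y : Φ → ℕ → β} {c : ℝ}
    (hY : ∀ x, ∑ φ, (1 - p)⁻¹ ^ Nat.count (fun k => Y φ k = Y x k) N ≤ c * Fintype.card Φ) :
    c⁻¹ ≤ P.real (⋃ φ, {ω | ∀ k < N, ω (e k (Y φ k)) = false}) := by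
  have := hP.1
  have : 0 < 1 - p := by linarith
  set n : ℝ := (Fintype.card Φ : ℝ)
  have hn : 0 < n := by positivity
  let E (φ : Φ) : Set (ι → Bool) := {ω | ∀ k < N, ω (e k (Y φ k)) = false}
  have hE (φ : Φ) : MeasurableSet (E φ) := by
    change MeasurableSet {ω : ι → Bool | ∀ k < N, ω (e k (Y φ k)) = false}
    measurability
  have second_moment : ∑ φ, ∑ ψ, P.real (E φ ∩ E ψ) ≤ ((1 - p) ^ N * n) ^ 2 * c :=
    calc ∑ φ, ∑ ψ, P.real (E φ ∩ E ψ)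
        = ∑ φ, (1 - p) ^ (2 * N) * ∑ ψ, (1 - p)⁻¹ ^ Nat.count (fun k => Y ψ k = Y φ k) N := by
          simp only [E, hP.measureReal_path_inter_path hp he, mul_sum]
      _ ≤ ∑ _φ : Φ, (1 - p) ^ (2 * N) * (c * n) := by gcongr; exact hY _
      _ = ((1 - p) ^ N * n) ^ 2 * c := by
          rw [sum_const, card_univ, nsmul_eq_mul]
          ring
  have one_le : 1 ≤ P.real (⋃ φ, E φ) * c := by
    refine le_of_mul_le_mul_left ?_ (show 0 < ((1 - p) ^ N * n) ^ 2 by positivity)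
    calc ((1 - p) ^ N * n) ^ 2 * 1 = (∑ φ, P.real (E φ)) ^ 2 := by
          simp only [E, hP.measureReal_path hp he, sum_const, card_univ, nsmul_eq_mul]
          ring
      _ ≤ P.real (⋃ φ, E φ) * ∑ φ, ∑ ψ, P.real (E φ ∩ E ψ) :=
          sq_sum_measureReal_le_measureReal_iUnion_mul P hE
      _ ≤ P.real (⋃ φ, E φ) * (((1 - p) ^ N * n) ^ 2 * c) := by gcongr
      _ = ((1 - p) ^ N * n) ^ 2 * (P.real (⋃ φ, E φ) * c) := by ring
  have hc : 0 < c := by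
    by_contra! hc
    linarith [mul_nonpos_of_nonneg_of_nonpos (measureReal_nonneg (μ := P) (s := ⋃ φ, E φ)) hc]
  exact (inv_le_iff_one_le_mul₀ hc).2 one_le

end SecondMoment

/-! ### Flights -/

theorem card_le_factorial_of_map_eq {α : Type*} {m : ℕ} (S : Finset (Fin m → α))
    (hS : ∀ f ∈ S, ∀ g ∈ S, univ.val.map f = univ.val.map g) : #S ≤ m.factorial := by
  classical
  rcases S.eq_empty_or_nonempty with rfl | ⟨f, hf⟩
  · simp
  have image_subset : S.image List.ofFn ⊆ (List.ofFn f).permutations.toFinset := by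
    intro l hl
    obtain ⟨g, hg, rfl⟩ := mem_image.1 hl
    rw [List.mem_toFinset, List.mem_permutations, ← Multiset.coe_eq_coe, ← Fin.univ_val_map,
      ← Fin.univ_val_map]
    exact hS g hg f hf
  calc #S = #(S.image List.ofFn) := (card_image_of_injective S List.ofFn_injective).symm
    _ ≤ #(List.ofFn f).permutations.toFinset := card_le_card image_subset
    _ ≤ (List.ofFn f).permutations.length := List.toFinset_card_le _
    _ = m.factorial := by rw [List.length_permutations, List.length_ofFn]

theorem card_le_of_forall_le_multiset {α : Type*} {z : Multiset α} {J : ℕ}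
    (S : Finset (Multiset α)) (hS : ∀ y ∈ S, y ≤ z ∧ z.card ≤ y.card + J) :
    #S ≤ (J + 1) * (z.card + 1) ^ J := by
  classical
  have subset_biUnion : S ⊆ (range (J + 1)).biUnion fun j =>
      (z.powersetCard j).toFinset.image fun v => z - v := by
    intro y hy
    obtain ⟨hyz, hcard⟩ := hS y hy
    simp only [mem_biUnion, mem_range, mem_image, Multiset.mem_toFinset, Multiset.mem_powersetCard]
    exact ⟨z.card - y.card, by lia, z - y, ⟨Multiset.sub_le_self _ _, Multiset.card_sub hyz⟩,
      tsub_tsub_cancel_of_le hyz⟩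
  refine (card_le_card subset_biUnion).trans
    ((card_biUnion_le_card_mul _ _ ((z.card + 1) ^ J) fun j hj => ?_).trans_eq (by simp))
  calc #((z.powersetCard j).toFinset.image fun v => z - v)
      ≤ (z.powersetCard j).card := card_image_le.trans (Multiset.toFinset_card_le _)
    _ = z.card.choose j := Multiset.card_powersetCard _ _
    _ ≤ z.card ^ j := Nat.choose_le_pow _ _
    _ ≤ (z.card + 1) ^ j := by gcongr; lia
    _ ≤ (z.card + 1) ^ J := by gcongr <;> simp_all

/-- A flight assigns to each particle a direction in `Fin D` and an arrival slot. The particles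
come in `I` groups, the `i`-th of which has `M i` particles and `L i` consecutive slots. -/
abbrev Flight (D I : ℕ) (M L : ℕ → ℕ) := (i : Fin I) → Fin (M i) → Fin D × Fin (L i)

/-- The first slot of the `i`-th group, when the groups use their slots one after another. -/
def startTime (L : ℕ → ℕ) (i : ℕ) : ℕ := ∑ j ∈ range i, L j

theorem startTime_succ (L : ℕ → ℕ) (i : ℕ) : startTime L (i + 1) = startTime L i + L i :=
  sum_range_succ _ _

theorem startTime_mono (L : ℕ → ℕ) : Monotone (startTime L) :=
  monotone_nat_of_le_succ fun i => by rw [startTime_succ]; lia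

theorem startTime_add_lt {L : ℕ → ℕ} {i j : ℕ} (hij : i < j) (s : Fin (L i)) :
    startTime L i + s < startTime L j := by
  have := startTime_mono L (Nat.succ_le_of_lt hij)
  rw [Nat.succ_eq_add_one, startTime_succ] at this
  lia

theorem startTime_add_inj {L : ℕ → ℕ} {i j : ℕ} {s : Fin (L i)} {t : Fin (L j)}
    (h : startTime L i + s = startTime L j + t) : i = j := by
  rcases lt_trichotomy i j with hlt | heq | hlt
  · have := startTime_add_lt hlt s
    lia
  · exact heq
  · have := startTime_add_lt hlt t
    lia

namespace Flight

variable {D I : ℕ} {M L : ℕ → ℕ}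

/-- The slot in which a particle arrives. -/
def arrivalTime (φ : Flight D I M L) (p : Σ i : Fin I, Fin (M i)) : ℕ :=
  startTime L p.1 + (φ p.1 p.2).2

/-- The directions of the particles arriving in slot `k`. -/
def arrivals (φ : Flight D I M L) (k : ℕ) : Multiset (Fin D) :=
  (univ.filter fun p => φ.arrivalTime p = k).val.map fun p => (φ p.1 p.2).1

/-- The position of a flight in slot `k`: the directions of the particles that have arrived. -/
def pos (φ : Flight D I M L) (k : ℕ) : Multiset (Fin D) := ∑ j ∈ range (k + 1), φ.arrivals j

theorem pos_succ (φ : Flight D I M L) (k : ℕ) : φ.pos (k + 1) = φ.pos k + φ.arrivals (k + 1) :=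
  sum_range_succ _ _

theorem pos_le_succ (φ : Flight D I M L) (k : ℕ) : φ.pos k ≤ φ.pos (k + 1) :=
  φ.pos_succ k ▸ Multiset.le_add_right _ _

theorem card_pos (φ : Flight D I M L) (k : ℕ) :
    (φ.pos k).card = #(univ.filter fun p => φ.arrivalTime p ≤ k) := by
  rw [card_eq_sum_card_fiberwise (f := φ.arrivalTime) (t := range (k + 1))
    fun p hp => by simpa [Nat.lt_succ_iff] using hp, pos, Multiset.card_sum]
  refine sum_congr rfl fun j hj => ?_
  rw [arrivals, Multiset.card_map, ← Finset.card_def, filter_filter]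
  congr 1
  ext p
  simp only [mem_range, mem_filter] at hj ⊢
  lia

theorem card_particles : Fintype.card (Σ i : Fin I, Fin (M i)) = ∑ i ∈ range I, M i := by
  rw [Fintype.card_sigma, sum_range]
  simp

theorem card_pos_le (φ : Flight D I M L) (k : ℕ) : (φ.pos k).card ≤ ∑ i ∈ range I, M i := by
  rw [card_pos, ← card_particles]
  exact card_le_univ _

theorem card_pos_eq (φ : Flight D I M L) {k : ℕ} (hk : startTime L I ≤ k + 1) :
    (φ.pos k).card = ∑ i ∈ range I, M i := by
  rw [card_pos, ← card_particles, filter_true_of_mem fun p _ => ?_, card_univ]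
  have := startTime_add_lt p.1.2 (φ p.1 p.2).2
  rw [arrivalTime]
  lia

theorem card_arrivals_le (φ : Flight D I M L) {J : ℕ} (hJ : ∀ i < I, M i ≤ J) (k : ℕ) :
    (φ.arrivals k).card ≤ J := by
  rw [arrivals, Multiset.card_map, ← Finset.card_def]
  rcases (univ.filter fun p => φ.arrivalTime p = k).eq_empty_or_nonempty with h | ⟨p₀, h₀⟩
  · simp [h]
  have subset_group : (univ.filter fun p => φ.arrivalTime p = k)
      ⊆ univ.map (Function.Embedding.sigmaMk (β := fun i : Fin I => Fin (M i)) p₀.1) := by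
    rintro ⟨i, m⟩ hp
    obtain rfl : i = p₀.1 :=
      Fin.ext (startTime_add_inj ((mem_filter.1 hp).2.trans (mem_filter.1 h₀).2.symm))
    simp
  exact (card_le_card subset_group).trans (by simpa using hJ p₀.1 p₀.1.2)

theorem card_image_pos_le {J : ℕ} (hJ : ∀ i < I, M i ≤ J) (k : ℕ) (z : Multiset (Fin D))
    (S : Finset (Flight D I M L)) (hS : ∀ φ ∈ S, φ.pos (k + 1) = z) :
    #(S.image fun φ => φ.pos k) ≤ (J + 1) * (∑ i ∈ range I, M i + 1) ^ J := by
  rcases S.eq_empty_or_nonempty with rfl | ⟨φ₀, h₀⟩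
  · simp
  have card_z_le : z.card ≤ ∑ i ∈ range I, M i := hS φ₀ h₀ ▸ φ₀.card_pos_le (k + 1)
  calc #(S.image fun φ => φ.pos k)
      ≤ (J + 1) * (z.card + 1) ^ J := by
        refine card_le_of_forall_le_multiset _ fun y hy => ?_
        obtain ⟨φ, hφ, rfl⟩ := mem_image.1 hy
        refine ⟨hS φ hφ ▸ φ.pos_le_succ k, ?_⟩
        rw [← hS φ hφ, pos_succ, Multiset.card_add]
        exact Nat.add_le_add_left (φ.card_arrivals_le hJ _) _
    _ ≤ _ := by gcongr

theorem arrivals_eq_of_eqOn {φ ψ : Flight D I M L} {b : ℕ}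
    (h : Set.EqOn φ.pos ψ.pos (Set.Iic b)) {k : ℕ} (hk : k ≤ b) : φ.arrivals k = ψ.arrivals k := by
  cases k with
  | zero => simpa [pos] using h hk
  | succ k =>
    have hsucc := h hk
    rw [pos_succ, pos_succ, h (show k ≤ b by lia)] at hsucc
    exact add_left_cancel hsucc

theorem count_map_group (φ : Flight D I M L) (i : Fin I) (a : Fin D) (t : Fin (L i)) :
    (univ.val.map (φ i)).count (a, t) = (φ.arrivals (startTime L i + t)).count a := by
  rw [arrivals, Multiset.count_map, Multiset.count_map, ← filter_val, ← filter_val,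
    ← Finset.card_def, ← Finset.card_def, filter_filter,
    ← card_map (Function.Embedding.sigmaMk (β := fun i : Fin I => Fin (M i)) i)]
  congr 1
  ext ⟨j, p⟩
  simp only [Finset.mem_map, mem_filter, mem_univ, true_and]
  constructor
  · rintro ⟨p', hp', heq⟩
    obtain ⟨rfl, h⟩ := Sigma.mk.inj_iff.1 heq
    obtain rfl := eq_of_heq h
    simp [arrivalTime, ← hp']
  · rintro ⟨h1, h2⟩
    obtain rfl : j = i := Fin.ext (startTime_add_inj h1)
    exact ⟨p, Prod.ext h2 (Fin.ext (by simpa [arrivalTime] using h1.symm)), rfl⟩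

/-- An upper bound for the number of flights with prescribed positions up to slot `b`: the groups
whose slots are all at most `b` are determined up to a permutation of their particles. -/
def fiberBound (D I : ℕ) (M L : ℕ → ℕ) (b : ℕ) : ℕ :=
  ∏ i ∈ range I, if startTime L (i + 1) ≤ b + 1 then (M i).factorial else (D * L i) ^ M i

theorem card_le_fiberBound (b : ℕ) (S : Finset (Flight D I M L))
    (hS : ∀ φ ∈ S, ∀ ψ ∈ S, Set.EqOn φ.pos ψ.pos (Set.Iic b)) : #S ≤ fiberBound D I M L b := by
  classical
  have subset_pi : S ⊆ Fintype.piFinset fun i => S.image fun φ => φ i := fun φ hφ =>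
    Fintype.mem_piFinset.2 fun i => mem_image_of_mem (fun φ : Flight D I M L => φ i) hφ
  refine (card_le_card subset_pi).trans ?_
  rw [Fintype.card_piFinset, fiberBound, prod_range]
  refine prod_le_prod' fun i _ => ?_
  split_ifs with hi
  · refine card_le_factorial_of_map_eq _ ?_
    simp only [mem_image]
    rintro _ ⟨φ, hφ, rfl⟩ _ ⟨ψ, hψ, rfl⟩
    ext ⟨a, t⟩
    rw [startTime_succ] at hi
    rw [count_map_group, count_map_group, arrivals_eq_of_eqOn (hS φ hφ ψ hψ) (by lia)]
  · exact (card_le_univ _).trans_eq (by simp)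

theorem card_flight : Fintype.card (Flight D I M L) = ∏ i ∈ range I, (D * L i) ^ M i := by
  rw [Fintype.card_pi, prod_range]
  simp

theorem fiberBound_le {k b : ℕ} {ρ : ℕ → ℝ} (hkI : k ≤ I) (hb : startTime L k ≤ b + 1)
    (hρ : ∀ i < k, ((M i).factorial : ℝ) ≤ ρ i * (D * L i) ^ M i) (hM : ∀ i < I, M i ≤ D * L i) :
    (fiberBound D I M L b : ℝ)
      ≤ (∏ i ∈ range k, ρ i) * Fintype.card (Flight D I M L) := by
  have determined (i : ℕ) (hi : i < k) : startTime L (i + 1) ≤ b + 1 :=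
    (startTime_mono L hi).trans hb
  have factorial_le (i : ℕ) (hi : i < I) : (M i).factorial ≤ (D * L i) ^ M i :=
    (M i).factorial_le_pow.trans (Nat.pow_le_pow_left (hM i hi) _)
  rw [fiberBound, card_flight, ← prod_range_mul_prod_Ico _ hkI,
    ← prod_range_mul_prod_Ico (fun i => (D * L i) ^ M i) hkI]
  push_cast
  rw [← mul_assoc, ← prod_mul_distrib]
  refine mul_le_mul (prod_le_prod (fun i _ => by positivity) fun i hi => ?_)
    (prod_le_prod (fun i _ => by positivity) fun i hi => ?_) (by positivity) ?_
  · rw [if_pos (determined i (mem_range.1 hi))]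
    exact hρ i (mem_range.1 hi)
  · split_ifs
    · exact_mod_cast factorial_le i (mem_Ico.1 hi).2
    · exact le_rfl
  · exact prod_nonneg fun i hi =>
      (Nat.cast_nonneg _).trans (hρ i (mem_range.1 hi))

end Flight

/-! ### Closed flights -/

/-- The vector in `ℤ^{D+1}` that takes one unit step for each of the directions in `m`. Flights
only move in the last `D` coordinates: stepping in coordinate `0` leads to unexplored sites. -/
def displacement {D : ℕ} (m : Multiset (Fin D)) : Fin (D + 1) → ℤ :=
  Fin.cons 0 fun a => (m.count a : ℤ)

theorem displacement_zero {D : ℕ} : displacement (0 : Multiset (Fin D)) = 0 := by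
  funext i
  cases i using Fin.cases <;> simp [displacement]

theorem displacement_add {D : ℕ} (m m' : Multiset (Fin D)) :
    displacement (m + m') = displacement m + displacement m' := by
  funext i
  cases i using Fin.cases <;> simp [displacement]

theorem displacement_singleton {D : ℕ} (a : Fin D) : displacement {a} = Pi.single a.succ 1 := by
  funext i
  cases i using Fin.cases <;>
    simp [displacement, Pi.single_apply, Multiset.count_singleton, eq_comm]

theorem displacement_injective {D : ℕ} :
    Function.Injective (displacement : Multiset (Fin D) → Fin (D + 1) → ℤ) := by
  intro m m' h
  ext a
  simpa [displacement] using congrFun h a.succ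

theorem sum_displacement {D : ℕ} (m : Multiset (Fin D)) : ∑ i, displacement m i = m.card := by
  rw [Fin.sum_univ_succ]
  simp only [displacement, Fin.cons_zero, Fin.cons_succ, zero_add]
  exact_mod_cast Multiset.sum_count_eq_card fun a _ => mem_univ a

/-- The site visited in slot `k` by a walker that starts from `(x, h)`, has taken the steps in `m`
so far, and climbs by one unit with each step and drops by one unit with each slot. -/
def walkSite {D : ℕ} (x : Fin (D + 1) → ℤ) (h : ℤ) (k : ℕ) (m : Multiset (Fin D)) :
    Site (D + 1) :=
  Fin.snoc (α := fun _ => ℤ) (x + displacement m) (h + m.card - k)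

theorem walkSite_injective2 {D : ℕ} (x : Fin (D + 1) → ℤ) (h : ℤ) :
    Function.Injective2 (walkSite x h) := by
  intro k l m m' heq
  obtain ⟨hpos, hheight⟩ := Fin.snoc_injective2 heq
  obtain rfl : m = m' := displacement_injective (add_left_cancel hpos)
  exact ⟨by lia, rfl⟩

/-- The event that all sites visited by the flight `φ` from `(x, h)` before time `N` are closed. -/
def flightClosed {D I : ℕ} {M L : ℕ → ℕ} (N : ℕ) (x : Fin (D + 1) → ℤ) (h : ℤ)
    (φ : Flight D I M L) : Set (Config (D + 1)) :=
  {ω | ∀ k < N, ω (walkSite x h k (φ.pos k)) = false}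

theorem measurableSet_flightClosed {D I : ℕ} {M L : ℕ → ℕ} (N : ℕ) (x : Fin (D + 1) → ℤ) (h : ℤ)
    (φ : Flight D I M L) :
    MeasurableSet[cylinderEvents {y | y 0 = x 0}] (flightClosed N x h φ) :=
  measurableSet_cylinderEvents_forall_lt
    (fun k => by simp [walkSite, displacement]) N

theorem half_le_measureReal_iUnion_flightClosed {D I N J : ℕ} {M L : ℕ → ℕ} {p : ℝ}
    {P : Measure (Config (D + 1))} [Nonempty (Flight D I M L)] (hP : IsBernoulli p P) (hp : p < 1)
    (hJ : ∀ i < I, M i ≤ J)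
    (hsum : ∑ b ∈ range N, (1 - p)⁻¹ ^ (b + 1) *
        ((1 + ((J + 1) * (∑ i ∈ range I, M i + 1) ^ J : ℕ) * (1 - p)) ^ b *
          Flight.fiberBound D I M L b)
      ≤ Fintype.card (Flight D I M L)) (x : Fin (D + 1) → ℤ) (h : ℤ) :
    2⁻¹ ≤ P.real (⋃ φ : Flight D I M L, flightClosed N x h φ) := by
  refine hP.inv_le_measureReal_iUnion_path hp (walkSite_injective2 x h) fun φ => ?_
  have := sum_inv_pow_count_eq_le (q := 1 - p) (Y := fun ψ : Flight D I M L => ψ.pos) φ.pos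
    (by linarith) (Nat.cast_nonneg _) (fun b => Nat.cast_nonneg _)
    (fun k z S hS => Nat.cast_le.2 (Flight.card_image_pos_le hJ k z S hS))
    (fun b S hS => Nat.cast_le.2 (Flight.card_le_fiberBound b S hS)) N
  linarith

section Surface

variable {D : ℕ} {F : (Fin (D + 1) → ℤ) → ℤ} {x : Fin (D + 1) → ℤ}

theorem IsLipschitzFn.le_add_one {d : ℕ} {F : (Fin d → ℤ) → ℤ} (hF : IsLipschitzFn F)
    (x : Fin d → ℤ) (i : Fin d) : F (x + Pi.single i 1) ≤ F x + 1 := by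
  have norm_single : ∑ j, |(x + Pi.single i 1 : Fin d → ℤ) j - x j| = 1 := by
    simp [Pi.single_apply, apply_ite abs]
  have := (abs_le.1 (hF _ _ norm_single)).2
  linarith

theorem IsLipschitzFn.le_add_card (hF : IsLipschitzFn F) (x : Fin (D + 1) → ℤ)
    (m : Multiset (Fin D)) : F (x + displacement m) ≤ F x + m.card := by
  induction m using Multiset.induction_on with
  | empty => simp [displacement_zero]
  | cons a m ih =>
    have := hF.le_add_one (x + displacement m) a.succ
    rw [← Multiset.singleton_add, add_comm {a} m, displacement_add, displacement_singleton,
      ← add_assoc, Multiset.card_add, Multiset.card_singleton]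
    push_cast
    linarith

/- A surface that is below the walker at a closed site is strictly below it; the walker then drops
by one unit, and climbs as fast as the surface can. -/
theorem IsLipschitzFn.lt_of_mem_flightClosed {I N : ℕ} {M L : ℕ → ℕ} (hF : IsLipschitzFn F)
    {ω : Config (D + 1)} (hopen : ∀ x, ω (Fin.snoc x (F x)) = true) {h : ℤ} (hx : F x ≤ h)
    {φ : Flight D I M L} (hφ : ω ∈ flightClosed N x h φ) {k : ℕ} (hk : k < N) :
    F (x + displacement (φ.pos k)) < h + (φ.pos k).card - k := by
  have lt_of_le (hle : F (x + displacement (φ.pos k)) ≤ h + (φ.pos k).card - k) :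
      F (x + displacement (φ.pos k)) < h + (φ.pos k).card - k := by
    refine hle.lt_of_ne fun heq => ?_
    have closed := hφ k hk
    rw [walkSite, ← heq, hopen] at closed
    exact absurd closed (by decide)
  refine lt_of_le ?_
  cases k with
  | zero =>
    have := hF.le_add_card x (φ.pos 0)
    push_cast
    linarith
  | succ k =>
    have before := IsLipschitzFn.lt_of_mem_flightClosed hF hopen hx hφ (Nat.lt_of_succ_lt hk)
    have climb := hF.le_add_card (x + displacement (φ.pos k)) (φ.arrivals (k + 1))
    rw [φ.pos_succ, displacement_add, ← add_assoc, Multiset.card_add]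
    push_cast
    linarith
termination_by k

end Surface

/-! ### Exploration along closed flights -/

/-- A sequential exploration of the configurations on `ι`. In state `y` one reads the outcome
`observe y ω` off the sites in `current y` and moves to the state `next y a` determined by the
outcome `a`; only sites in `available y` are inspected from `y` on, and each of them at most in one
state. -/
structure Exploration (ι Y A : Type*) where
  observe : Y → (ι → Bool) → A
  next : Y → A → Y
  current : Y → Set ι
  available : Y → Set ι
  measurableSet_observe :
    ∀ y a, MeasurableSet[cylinderEvents (current y)] (observe y ⁻¹' {a})
  current_subset : ∀ y, current y ⊆ available y
  available_next : ∀ y a, available (next y a) ⊆ available y \ current y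

namespace Exploration

variable {ι Y A : Type*} (E : Exploration ι Y A)

/-- One round of the exploration in the configuration `ω`. -/
def step (ω : ι → Bool) (y : Y) : Y := E.next y (E.observe y ω)

theorem setOf_iterate_step_succ (n : ℕ) (y : Y) (G : Set Y) :
    {ω | (E.step ω)^[n + 1] y ∈ G}
      = ⋃ a, E.observe y ⁻¹' {a} ∩ {ω | (E.step ω)^[n] (E.next y a) ∈ G} := by
  ext ω
  simp [step]

theorem measurableSet_setOf_iterate_step [Finite A] (n : ℕ) (y : Y) (G : Set Y) :
    MeasurableSet[cylinderEvents (E.available y)] {ω | (E.step ω)^[n] y ∈ G} := by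
  induction n generalizing y with
  | zero => simp
  | succ n ih =>
    rw [setOf_iterate_step_succ]
    refine MeasurableSet.iUnion fun a => ?_
    have observed := cylinderEvents_mono (E.current_subset y) _ (E.measurableSet_observe y a)
    have continued := cylinderEvents_mono ((E.available_next y a).trans Set.sdiff_subset) _
      (ih (E.next y a))
    exact @MeasurableSet.inter _ (cylinderEvents (E.available y)) _ _ observed continued

variable {p : ℝ} {P : Measure (ι → Bool)} {W : Y → ℝ} {γ : ℝ} {G : Set Y} [Fintype A]

theorem measureReal_iterate_step_le (hP : IsBernoulli p P) (hγ : 0 ≤ γ) (hW : ∀ y, 0 ≤ W y)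
    (hG : ∀ y ∈ G, 1 ≤ W y)
    (hstep : ∀ y, ∑ a, P.real (E.observe y ⁻¹' {a}) * W (E.next y a) ≤ γ * W y) (n : ℕ) (y : Y) :
    P.real {ω | (E.step ω)^[n] y ∈ G} ≤ γ ^ n * W y := by
  have := hP.1
  induction n generalizing y with
  | zero =>
    by_cases hy : y ∈ G
    · simpa [hy] using hG y hy
    · simpa [hy] using hW y
  | succ n ih =>
    calc P.real {ω | (E.step ω)^[n + 1] y ∈ G}
        ≤ ∑ a, P.real (E.observe y ⁻¹' {a} ∩ {ω | (E.step ω)^[n] (E.next y a) ∈ G}) := by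
          rw [setOf_iterate_step_succ]
          exact measureReal_iUnion_fintype_le _
      _ = ∑ a, P.real (E.observe y ⁻¹' {a}) * P.real {ω | (E.step ω)^[n] (E.next y a) ∈ G} :=
          sum_congr rfl fun a _ => hP.measureReal_inter
            (Set.disjoint_sdiff_right.mono_right (E.available_next y a))
            (E.measurableSet_observe y a) (E.measurableSet_setOf_iterate_step n _ G)
      _ ≤ ∑ a, P.real (E.observe y ⁻¹' {a}) * (γ ^ n * W (E.next y a)) := by
          gcongr
          exact ih _
      _ = γ ^ n * ∑ a, P.real (E.observe y ⁻¹' {a}) * W (E.next y a) := by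
          rw [mul_sum]
          exact sum_congr rfl fun a _ => by ring
      _ ≤ γ ^ n * (γ * W y) := by
          gcongr
          exact hstep y
      _ = γ ^ (n + 1) * W y := by ring

theorem measure_forall_iterate_step_eq_zero (hP : IsBernoulli p P) (hγ : 0 ≤ γ) (hγ1 : γ < 1)
    (hW : ∀ y, 0 ≤ W y) (hG : ∀ y ∈ G, 1 ≤ W y)
    (hstep : ∀ y, ∑ a, P.real (E.observe y ⁻¹' {a}) * W (E.next y a) ≤ γ * W y) (y : Y) :
    P {ω | ∀ n, (E.step ω)^[n] y ∈ G} = 0 := by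
  have := hP.1
  have decay : Tendsto (fun n => γ ^ n * W y) atTop (𝓝 0) := by
    simpa using (tendsto_pow_atTop_nhds_zero_of_lt_one hγ hγ1).mul_const (W y)
  refine (measureReal_eq_zero_iff (by finiteness)).1 (le_antisymm ?_ measureReal_nonneg)
  refine ge_of_tendsto' decay fun n => ?_
  exact (measureReal_mono (Set.ofPred_subset_ofPred.2 fun ω hω => hω n)).trans
    (E.measureReal_iterate_step_le hP hγ hW hG hstep n y)

end Exploration

section FlightExploration

variable {D I N : ℕ} {M L : ℕ → ℕ} {α : ℝ}

open Classical in
/-- The closed flights from `(x, h)`, where the state `y` is the pair of `x` and `h`. -/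
noncomputable def closedFlights (I : ℕ) (M L : ℕ → ℕ) (N : ℕ) (y : (Fin (D + 1) → ℤ) × ℤ)
    (ω : Config (D + 1)) : Finset (Flight D I M L) :=
  univ.filter fun φ => ω ∈ flightClosed N y.1 y.2 φ

theorem mem_closedFlights {y : (Fin (D + 1) → ℤ) × ℤ} {ω : Config (D + 1)} {φ : Flight D I M L} :
    φ ∈ closedFlights I M L N y ω ↔ ω ∈ flightClosed N y.1 y.2 φ := by
  simp [closedFlights]

theorem measurableSet_closedFlights (y : (Fin (D + 1) → ℤ) × ℤ) (A : Finset (Flight D I M L)) :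
    MeasurableSet[cylinderEvents {z | z 0 = y.1 0}] (closedFlights I M L N y ⁻¹' {A}) := by
  classical
  have : closedFlights I M L N y ⁻¹' {A}
      = ⋂ φ, if φ ∈ A then flightClosed N y.1 y.2 φ else (flightClosed N y.1 y.2 φ)ᶜ := by
    ext ω
    simp only [Set.mem_preimage, Set.mem_singleton_iff, Set.mem_iInter, Finset.ext_iff,
      mem_closedFlights]
    refine forall_congr' fun φ => ?_
    split_ifs with hφ <;> simp [hφ]
  rw [this]
  refine MeasurableSet.iInter fun φ => ?_
  split_ifs
  exacts [measurableSet_flightClosed N y.1 y.2 φ, (measurableSet_flightClosed N y.1 y.2 φ).compl]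

open Classical in
/-- Follow one of the flights in `A`, if there is any, then take a step in coordinate `0`. -/
noncomputable def nextState (N : ℕ) (y : (Fin (D + 1) → ℤ) × ℤ) (A : Finset (Flight D I M L)) :
    (Fin (D + 1) → ℤ) × ℤ :=
  if hA : A.Nonempty then
    (y.1 + displacement (hA.choose.pos (N - 1)) + Pi.single 0 1,
      y.2 + (∑ i ∈ range I, M i : ℕ) - N + 1)
  else (y.1 + Pi.single 0 1, y.2 + 1)

theorem nextState_fst_zero (y : (Fin (D + 1) → ℤ) × ℤ) (A : Finset (Flight D I M L)) :
    (nextState N y A).1 0 = y.1 0 + 1 := by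
  unfold nextState
  split_ifs <;> simp [displacement]

/-- The exploration that repeatedly looks for a closed flight among the sites with the first
coordinate of the current state. -/
noncomputable def flightExploration (D I : ℕ) (M L : ℕ → ℕ) (N : ℕ) :
    Exploration (Site (D + 1)) ((Fin (D + 1) → ℤ) × ℤ) (Finset (Flight D I M L)) where
  observe := closedFlights I M L N
  next := nextState N
  current y := {z | z 0 = y.1 0}
  available y := {z | y.1 0 ≤ z 0}
  measurableSet_observe := measurableSet_closedFlights
  current_subset _ _ hz := hz.ge
  available_next y A z hz := by
    simp only [Set.mem_sdiff, Set.mem_ofPred_eq, nextState_fst_zero] at hz ⊢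
    lia

/-- The height of the state `y` relative to the plane of slope `α`. -/
noncomputable def relHeight (α : ℝ) (y : (Fin (D + 1) → ℤ) × ℤ) : ℝ :=
  y.2 - α * ∑ i, (y.1 i : ℝ)

theorem relHeight_add (α : ℝ) (x v : Fin (D + 1) → ℤ) (h t : ℤ) :
    relHeight α (x + v, h + t) = relHeight α (x, h) + (t - α * ∑ i, (v i : ℝ)) := by
  simp only [relHeight, Pi.add_apply, Int.cast_add, sum_add_distrib]
  ring

theorem relHeight_nextState_empty (α : ℝ) (y : (Fin (D + 1) → ℤ) × ℤ) :
    relHeight α (nextState N y (∅ : Finset (Flight D I M L))) = relHeight α y + (1 - α) := by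
  rw [nextState, dif_neg (by simp), relHeight_add, ← Int.cast_sum]
  simp

theorem relHeight_nextState_of_nonempty (hN : startTime L I ≤ N)
    (y : (Fin (D + 1) → ℤ) × ℤ) {A : Finset (Flight D I M L)} (hA : A.Nonempty) :
    relHeight α (nextState N y A)
      = relHeight α y + ((1 - α) * (∑ i ∈ range I, M i + 1 : ℕ) - N) := by
  rw [nextState, dif_pos hA, add_assoc y.1, add_sub_assoc, add_assoc y.2, relHeight_add]
  simp only [← Int.cast_sum, Pi.add_apply, sum_add_distrib, sum_displacement,
    Flight.card_pos_eq _ (show startTime L I ≤ N - 1 + 1 by lia)]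
  simp
  ring

theorem IsLipschitzFn.le_nextState (hN : startTime L I ≤ N) (hN0 : 0 < N)
    {F : (Fin (D + 1) → ℤ) → ℤ} (hF : IsLipschitzFn F) {ω : Config (D + 1)}
    (hopen : ∀ x, ω (Fin.snoc x (F x)) = true) {y : (Fin (D + 1) → ℤ) × ℤ} (hy : F y.1 ≤ y.2) :
    F (nextState N y (closedFlights I M L N y ω)).1
      ≤ (nextState N y (closedFlights I M L N y ω)).2 := by
  unfold nextState
  split_ifs with hA
  · have landed := hF.lt_of_mem_flightClosed hopen hy (mem_closedFlights.1 hA.choose_spec)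
      (Nat.sub_one_lt_of_lt hN0)
    have climb := hF.le_add_one (y.1 + displacement (hA.choose.pos (N - 1))) 0
    rw [Flight.card_pos_eq _ (by lia)] at landed
    dsimp only
    lia
  · exact (hF.le_add_one y.1 0).trans (Int.add_le_add_right hy 1)

theorem LIP_subset_iUnion_relHeight_pos (hN : startTime L I ≤ N) (hN0 : 0 < N) :
    LIP α (etaK (D + 1) (D + 1)) ⊆ ⋃ h : ℤ,
      {ω | ∀ n, ((flightExploration D I M L N).step ω)^[n] (0, h) ∈ {y | 0 < relHeight α y}} := by
  rintro ω ⟨F, hF, hω⟩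
  have below (n : ℕ) : F (((flightExploration D I M L N).step ω)^[n] (0, F 0)).1
      ≤ (((flightExploration D I M L N).step ω)^[n] (0, F 0)).2 := by
    induction n with
    | zero => exact le_rfl
    | succ n ih =>
      rw [Function.iterate_succ_apply']
      exact hF.le_nextState hN hN0 (fun x => (hω x).1) ih
  refine Set.mem_iUnion.2 ⟨F 0, fun n => ?_⟩
  set y := ((flightExploration D I M L N).step ω)^[n] (0, F 0)
  have etaK_eq_one (i : Fin (D + 1)) : etaK (D + 1) (D + 1) i = 1 := if_pos i.2
  have above_plane : α * ∑ i, (y.1 i : ℝ) < F y.1 := by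
    simpa [planeHt, Int.floor_lt, etaK_eq_one] using (hω y.1).2
  have : (F y.1 : ℝ) ≤ y.2 := mod_cast below n
  simp only [Set.mem_ofPred_eq, relHeight]
  linarith

theorem measureReal_closedFlights_eq_empty {P : Measure (Config (D + 1))} [IsProbabilityMeasure P]
    (y : (Fin (D + 1) → ℤ) × ℤ) :
    P.real (closedFlights I M L N y ⁻¹' {∅})
      = 1 - P.real (⋃ φ : Flight D I M L, flightClosed N y.1 y.2 φ) := by
  have : closedFlights I M L N y ⁻¹' {∅} = (⋃ φ : Flight D I M L, flightClosed N y.1 y.2 φ)ᶜ := by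
    ext ω
    simp [eq_empty_iff_forall_notMem, mem_closedFlights]
  rw [this, probReal_compl_eq_one_sub (.iUnion fun φ =>
    cylinderEvents_le_pi _ (measurableSet_flightClosed N y.1 y.2 φ))]

theorem sum_measureReal_closedFlights {P : Measure (Config (D + 1))} [IsProbabilityMeasure P]
    (y : (Fin (D + 1) → ℤ) × ℤ) :
    ∑ A : Finset (Flight D I M L), P.real (closedFlights I M L N y ⁻¹' {A}) = 1 := by
  have := sum_measureReal_preimage_singleton (μ := P) (f := closedFlights I M L N y) univ
    fun A _ => cylinderEvents_le_pi _ (measurableSet_closedFlights y A)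
  simpa using this

theorem rpow_relHeight_nextState_le (hα : 0 ≤ α) (hN : startTime L I ≤ N)
    (hgain : (1 - α) * (∑ i ∈ range I, M i + 1 : ℕ) ≤ N - 3)
    (y : (Fin (D + 1) → ℤ) × ℤ) (A : Finset (Flight D I M L)) :
    (3 / 2 : ℝ) ^ relHeight α (nextState N y A)
      ≤ (3 / 2 : ℝ) ^ relHeight α y * (8 / 27 + if A = ∅ then 3 / 2 - 8 / 27 else 0) := by
  rcases A.eq_empty_or_nonempty with rfl | hA
  · calc (3 / 2 : ℝ) ^ relHeight α (nextState N y ∅) ≤ (3 / 2 : ℝ) ^ (relHeight α y + 1) := by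
          rw [relHeight_nextState_empty]
          exact rpow_le_rpow_of_exponent_le (by norm_num) (by linarith)
      _ = _ := by rw [rpow_add_one (by norm_num), if_pos rfl, add_sub_cancel]
  · calc (3 / 2 : ℝ) ^ relHeight α (nextState N y A) ≤ (3 / 2 : ℝ) ^ (relHeight α y - 3) := by
          rw [relHeight_nextState_of_nonempty hN y hA]
          exact rpow_le_rpow_of_exponent_le (by norm_num) (by linarith)
      _ = _ := by
          rw [Real.rpow_sub (by norm_num), if_neg hA.ne_empty]
          norm_num [div_eq_mul_inv]

/- A failed round raises the relative height by at most `1` and a successful one lowers it by at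
least `3`, so `(3/2) ^ relHeight` shrinks on average: `(3/2 + (2/3)^3) / 2 = 97/108`. -/
theorem sum_measureReal_closedFlights_mul_le (hα : 0 ≤ α) (hN : startTime L I ≤ N)
    (hgain : (1 - α) * (∑ i ∈ range I, M i + 1 : ℕ) ≤ N - 3) {P : Measure (Config (D + 1))}
    [IsProbabilityMeasure P]
    (hhalf : ∀ x h, 2⁻¹ ≤ P.real (⋃ φ : Flight D I M L, flightClosed N x h φ))
    (y : (Fin (D + 1) → ℤ) × ℤ) :
    ∑ A, P.real (closedFlights I M L N y ⁻¹' {A}) * (3 / 2 : ℝ) ^ relHeight α (nextState N y A)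
      ≤ 97 / 108 * (3 / 2 : ℝ) ^ relHeight α y := by
  set w : ℝ := (3 / 2 : ℝ) ^ relHeight α y
  set f := P.real (closedFlights I M L N y ⁻¹' {∅})
  have hf : f ≤ 2⁻¹ := by
    simp only [f, measureReal_closedFlights_eq_empty]
    linarith [hhalf y.1 y.2]
  calc ∑ A, P.real (closedFlights I M L N y ⁻¹' {A}) * (3 / 2 : ℝ) ^ relHeight α (nextState N y A)
      ≤ ∑ A, P.real (closedFlights I M L N y ⁻¹' {A}) *
          (w * (8 / 27 + if A = ∅ then 3 / 2 - 8 / 27 else 0)) := by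
        gcongr
        exact rpow_relHeight_nextState_le hα hN hgain y _
    _ = w * (8 / 27 + f * (3 / 2 - 8 / 27)) := by
        simp only [mul_left_comm _ w, ← mul_sum, mul_add, sum_add_distrib, ← sum_mul,
          sum_measureReal_closedFlights, mul_ite, mul_zero]
        simp [f]
    _ ≤ w * (8 / 27 + 2⁻¹ * (3 / 2 - 8 / 27)) := by gcongr
    _ = 97 / 108 * w := by ring

theorem measure_LIP_eq_zero_of_half_le (hα : 0 ≤ α) (hN : startTime L I ≤ N) (hN0 : 0 < N)
    (hgain : (1 - α) * (∑ i ∈ range I, M i + 1 : ℕ) ≤ N - 3) {p : ℝ}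
    {P : Measure (Config (D + 1))} (hP : IsBernoulli p P)
    (hhalf : ∀ x h, 2⁻¹ ≤ P.real (⋃ φ : Flight D I M L, flightClosed N x h φ)) :
    P (LIP α (etaK (D + 1) (D + 1))) = 0 := by
  have := hP.1
  refine measure_mono_null (LIP_subset_iUnion_relHeight_pos (M := M) hN hN0)
    (measure_iUnion_null fun h => ?_)
  exact (flightExploration D I M L N).measure_forall_iterate_step_eq_zero hP
    (γ := 97 / 108) (W := fun y => (3 / 2 : ℝ) ^ relHeight α y) (by norm_num) (by norm_num)
    (fun y => by positivity)
    (fun y hy => one_le_rpow (by norm_num) (le_of_lt hy))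
    (sum_measureReal_closedFlights_mul_le hα hN hgain hhalf) _

end FlightExploration

/-! ### Asymptotics of the number of flights -/

theorem log_factorial_le {m : ℕ} (hm : m ≠ 0) :
    Real.log m.factorial ≤ m * Real.log m - m + Real.log m / 2 + 1 := by
  obtain ⟨k, rfl⟩ := Nat.exists_eq_succ_of_ne_zero hm
  have le_first := Stirling.log_stirlingSeq'_antitone (Nat.zero_le k)
  simp only [Function.comp_apply, Stirling.log_stirlingSeq_formula] at le_first
  rw [log_div (by positivity) (by positivity), log_mul (by positivity) (by positivity)] at le_first
  simp at le_first ⊢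
  linarith

theorem log_factorial_le_of_abs_sub_lt_one {m : ℕ} {y : ℝ} (hy : 1 ≤ y) (hm : |m - y| < 1) :
    Real.log m.factorial ≤ m * Real.log y - y + Real.log (y + 1) + 4 := by
  obtain ⟨hlow, hup⟩ := abs_lt.1 hm
  have hm0 : (0 : ℝ) < m := by linarith
  have tangent : m * Real.log m ≤ m * Real.log y + 2 := by
    have h := log_le_sub_one_of_pos (show 0 < (m : ℝ) / y by positivity)
    rw [log_div (by positivity) (by positivity)] at h
    have : m * (m / y - 1) ≤ 2 := by
      rw [div_sub_one (by positivity), mul_div_assoc', div_le_iff₀ (by positivity)]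
      nlinarith
    nlinarith
  have log_le : Real.log m ≤ Real.log (y + 1) := log_le_log hm0 (by linarith)
  have : 0 ≤ Real.log (y + 1) := log_nonneg (by linarith)
  have := log_factorial_le (m := m) (by rintro rfl; simp at hm0)
  linarith

theorem eventually_log_add_le_mul {δ : ℝ} (hδ : 0 < δ) (c : ℝ) :
    ∀ᶠ y : ℝ in atTop, Real.log y + c ≤ δ * y := by
  filter_upwards [isLittleO_log_id_atTop.bound (half_pos hδ), eventually_ge_atTop (c / (δ / 2)),
    eventually_ge_atTop 0] with y hlog hc hy
  rw [div_le_iff₀ (half_pos hδ)] at hc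
  rw [id, norm_of_nonneg hy] at hlog
  have := (le_abs_self _).trans hlog
  linarith

/- By Stirling's formula, `m!` is about `(m / e) ^ m`, which for `m = s * T` is
`T ^ m * ((s / e) ^ s) ^ T`. -/
theorem eventually_mul_factorial_le {s C K : ℝ} (hs : 1 ≤ s) (hC : (s / exp 1) ^ s < C)
    (hK : 0 < K) :
    ∀ᶠ T : ℕ in atTop, ∀ m : ℕ, |m - s * T| < 1 → K * m.factorial ≤ (T : ℝ) ^ m * C ^ T := by
  have hC0 : 0 < C := lt_of_le_of_lt (by positivity) hC
  have log_lt : s * Real.log s - s < Real.log C := by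
    have := log_lt_log (by positivity) hC
    rw [log_rpow (by positivity), log_div (by positivity) (by positivity), log_exp] at this
    linarith
  set δ := Real.log C - (s * Real.log s - s) with hδ
  have hδ0 : 0 < δ := by linarith
  have tendsto_add_one : Tendsto (fun T : ℕ => s * (T : ℝ) + 1) atTop atTop :=
    tendsto_atTop_add_const_right _ _
      (tendsto_natCast_atTop_atTop.const_mul_atTop (by linarith))
  filter_upwards [eventually_ge_atTop 1, tendsto_add_one.eventually
    (eventually_log_add_le_mul (show 0 < δ / s by positivity)
      (Real.log s + Real.log K + 4 + δ / s))]
    with T hT hgap m hm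
  have hT1 : (1 : ℝ) ≤ T := by exact_mod_cast hT
  have hfac := log_factorial_le_of_abs_sub_lt_one (one_le_mul_of_one_le_of_one_le hs hT1) hm
  rw [log_mul (by positivity) (by positivity)] at hfac
  have mul_log_le : m * Real.log s ≤ (s * T + 1) * Real.log s :=
    mul_le_mul_of_nonneg_right (by linarith [(abs_lt.1 hm).2]) (log_nonneg hs)
  have hgap' : Real.log (s * T + 1) + (Real.log s + Real.log K + 4) ≤ δ * T := by
    have : δ / s * (s * T + 1) = δ * T + δ / s := by field_simp
    linarith
  rw [← log_le_log_iff (by positivity) (by positivity), log_mul (by positivity) (by positivity),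
    log_mul (by positivity) (by positivity), Real.log_pow, Real.log_pow]
  have : δ * T = T * Real.log C - s * T * Real.log s + s * T := by rw [hδ]; ring
  linarith

/-- Numbers of particles in the groups of a flight: a first group of `r` particles, followed by
groups of about `σ` particles each, rounded so that the errors do not accumulate. -/
noncomputable def groupParticles (r : ℕ) (σ : ℝ) : ℕ → ℕ
  | 0 => r
  | i + 1 => ⌈σ * (i + 1 : ℕ)⌉₊ - ⌈σ * i⌉₊

/-- Numbers of slots of the groups of a flight: one for the first group, `T` for the others. -/
def groupSlots (T : ℕ) : ℕ → ℕ
  | 0 => 1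
  | _ + 1 => T

theorem startTime_groupSlots (T i : ℕ) : startTime (groupSlots T) (i + 1) = 1 + T * i := by
  induction i with
  | zero => simp [startTime, groupSlots]
  | succ i ih =>
    rw [startTime_succ, ih, groupSlots]
    ring

theorem groupSlots_pos {T : ℕ} (hT : 0 < T) : ∀ i, 0 < groupSlots T i
  | 0 => one_pos
  | _ + 1 => hT

section GroupParticles

variable {r : ℕ} {σ : ℝ}

theorem ceil_add_groupParticles_succ (hσ : 0 ≤ σ) (i : ℕ) :
    ⌈σ * i⌉₊ + groupParticles r σ (i + 1) = ⌈σ * (i + 1 : ℕ)⌉₊ :=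
  Nat.add_sub_cancel' (Nat.ceil_mono (by gcongr; lia))

theorem sum_groupParticles_succ (hσ : 0 ≤ σ) (n : ℕ) :
    ∑ i ∈ range n, groupParticles r σ (i + 1) = ⌈σ * n⌉₊ := by
  induction n with
  | zero => simp
  | succ n ih => rw [sum_range_succ, ih, ceil_add_groupParticles_succ hσ]

theorem sum_groupParticles (hσ : 0 ≤ σ) (n : ℕ) :
    ∑ i ∈ range (n + 1), groupParticles r σ i = r + ⌈σ * n⌉₊ := by
  rw [sum_range_succ', sum_groupParticles_succ hσ, add_comm, groupParticles]

theorem abs_groupParticles_succ_sub_lt (hσ : 0 ≤ σ) (i : ℕ) :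
    |groupParticles r σ (i + 1) - σ| < 1 := by
  have hsum : (⌈σ * i⌉₊ : ℝ) + groupParticles r σ (i + 1) = ⌈σ * (i + 1 : ℕ)⌉₊ := by
    exact_mod_cast ceil_add_groupParticles_succ hσ i
  have := Nat.le_ceil (σ * i)
  have := Nat.le_ceil (σ * (i + 1 : ℕ))
  have := Nat.ceil_lt_add_one (show 0 ≤ σ * i by positivity)
  have := Nat.ceil_lt_add_one (show 0 ≤ σ * (i + 1 : ℕ) by positivity)
  push_cast at *
  rw [abs_lt]
  constructor <;> linarith

theorem groupParticles_le (hr : ⌈σ⌉₊ ≤ r) : ∀ i, groupParticles r σ i ≤ r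
  | 0 => le_rfl
  | i + 1 => by
    have : ⌈σ * (i + 1 : ℕ)⌉₊ ≤ ⌈σ * i⌉₊ + ⌈σ⌉₊ := by
      simpa [mul_add] using Nat.ceil_add_le (σ * i) σ
    rw [groupParticles]
    lia

end GroupParticles

section FiberSum

variable {r T D : ℕ} {s C X : ℝ}

/-- An upper bound for the ratio of the number of permutations of the particles of a group to the
number of ways they can fly. -/
noncomputable def groupRatio (r D T : ℕ) (σ C : ℝ) : ℕ → ℝ
  | 0 => r.factorial / D ^ r
  | i + 1 => C ^ T / 2 / D ^ groupParticles r σ (i + 1)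

theorem factorial_groupParticles_le {σ : ℝ} (hσ : 0 ≤ σ) (hD : 0 < D)
    (hfac : ∀ m : ℕ, |m - σ| < 1 → 2 * m.factorial ≤ (T : ℝ) ^ m * C ^ T) :
    ∀ i, ((groupParticles r σ i).factorial : ℝ)
      ≤ groupRatio r D T σ C i * (D * groupSlots T i) ^ groupParticles r σ i
  | 0 => by simp [groupParticles, groupSlots, groupRatio, hD.ne']
  | i + 1 => by
    have := hfac _ (abs_groupParticles_succ_sub_lt (r := r) hσ i)
    calc ((groupParticles r σ (i + 1)).factorial : ℝ)
        ≤ C ^ T / 2 * T ^ groupParticles r σ (i + 1) := by linarith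
      _ = groupRatio r D T σ C (i + 1) *
          (D * groupSlots T (i + 1)) ^ groupParticles r σ (i + 1) := by
        rw [groupRatio, groupSlots, mul_pow]
        field_simp

theorem prod_groupRatio {σ : ℝ} (hσ : 0 ≤ σ) (i : ℕ) :
    ∏ j ∈ range (i + 1), groupRatio r D T σ C j
      = (C ^ T / 2) ^ i / D ^ ⌈σ * i⌉₊ * (r.factorial / D ^ r) := by
  rw [prod_range_succ', ← sum_groupParticles_succ (r := r) hσ, ← prod_pow_eq_pow_sum]
  simp only [groupRatio]
  rw [Finset.prod_div_distrib, prod_const, card_range]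

theorem prod_groupRatio_mul_le (hs : 0 ≤ s) (hC : 0 < C) (hX : X * C = (D : ℝ) ^ s) (hD : 0 < D)
    (i : ℕ) :
    (∏ j ∈ range (i + 1), groupRatio r D T (s * T) C j) * (D ^ r * 2 ^ i * X ^ (T * i))
      ≤ r.factorial := by
  have pow_le : (X * C) ^ (T * i) ≤ (D : ℝ) ^ ⌈s * T * i⌉₊ := by
    rw [hX, ← Real.rpow_natCast, ← Real.rpow_mul (by positivity), ← Real.rpow_natCast]
    refine Real.rpow_le_rpow_of_exponent_le (by exact_mod_cast hD) ?_
    refine le_of_eq_of_le ?_ (Nat.le_ceil _)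
    push_cast
    ring
  calc (∏ j ∈ range (i + 1), groupRatio r D T (s * T) C j) * (D ^ r * 2 ^ i * X ^ (T * i))
      = r.factorial * ((X * C) ^ (T * i) / D ^ ⌈s * T * i⌉₊) := by
        rw [prod_groupRatio (by positivity), mul_pow, div_pow, ← pow_mul]
        field_simp
    _ ≤ r.factorial :=
        mul_le_of_le_one_right (by positivity) ((div_le_one (by positivity)).2 pow_le)

theorem fiberBound_groups_mul_le {n : ℕ} (hs : 0 ≤ s) (hC : 0 < C) (hX0 : 0 ≤ X)
    (hX : X * C = (D : ℝ) ^ s) (hr : ⌈s * T⌉₊ ≤ r) (hrD : r ≤ D) (hD : 0 < D) (hT : 0 < T)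
    (hfac : ∀ m : ℕ, |m - s * T| < 1 → 2 * m.factorial ≤ (T : ℝ) ^ m * C ^ T)
    {b i : ℕ} (hi : i ≤ n) (hib : T * i ≤ b) :
    Flight.fiberBound D (n + 1) (groupParticles r (s * T)) (groupSlots T) b *
        (D ^ r * 2 ^ i * X ^ (T * i))
      ≤ r.factorial *
        Fintype.card (Flight D (n + 1) (groupParticles r (s * T)) (groupSlots T)) := by
  have fiberBound_le := Flight.fiberBound_le (k := i + 1) (b := b) (by lia : i + 1 ≤ n + 1)
    (by rw [startTime_groupSlots]; lia)
    (fun j _ => factorial_groupParticles_le (r := r) (by positivity) hD hfac j)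
    (fun j _ => (groupParticles_le hr j).trans
      (hrD.trans (Nat.le_mul_of_pos_right _ (groupSlots_pos hT j))))
  refine (mul_le_mul_of_nonneg_right fiberBound_le (by positivity)).trans ?_
  rw [mul_right_comm]
  exact mul_le_mul_of_nonneg_right (prod_groupRatio_mul_le hs hC hX hD i) (by positivity)

theorem mul_mul_le_div {u w f a c R F Z N : ℝ} (hu : u ≤ a * c) (hu0 : 0 ≤ u) (hw : w ≤ 2)
    (hf : 0 ≤ f) (hc : 0 ≤ c) (hR0 : 0 < R) (hZ : 0 ≤ Z) (hN : 0 < N)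
    (hfZ : f * (R * a) ≤ F * Z) (hR : N * (2 * F) * c ≤ R) : u * (w * f) ≤ Z / N := by
  rw [le_div_iff₀ hN]
  refine le_of_mul_le_mul_right ?_ hR0
  calc u * (w * f) * N * R ≤ u * (2 * f) * N * R := by gcongr
    _ ≤ a * c * (2 * f) * N * R := by gcongr
    _ = N * 2 * c * (f * (R * a)) := by ring
    _ ≤ N * 2 * c * (F * Z) := by gcongr
    _ = N * (2 * F) * c * Z := by ring
    _ ≤ R * Z := by gcongr
    _ = Z * R := mul_comm _ _

theorem sum_fiberBound_groups_le {n N e : ℕ} {q Q : ℝ} (hs : 0 ≤ s) (hC : 0 < C) (hX1 : 1 ≤ X)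
    (hX : X * C = (D : ℝ) ^ s) (hr : ⌈s * T⌉₊ ≤ r) (hrD : r ≤ D) (hD : 0 < D) (hT : 0 < T)
    (hfac : ∀ m : ℕ, |m - s * T| < 1 → 2 * m.factorial ≤ (T : ℝ) ^ m * C ^ T)
    (hq : 0 < q) (hqX : q⁻¹ ≤ X) (hQ : ∀ b < N, (1 + Q * q) ^ b ≤ 2) (hN : N ≤ T * n + e)
    (hshort : N * (2 * r.factorial) * X ^ T ≤ (D : ℝ) ^ r)
    (hlong : N * (2 * r.factorial) * X ^ e ≤ (D : ℝ) ^ r * 2 ^ n) :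
    ∑ b ∈ range N, q⁻¹ ^ (b + 1) * ((1 + Q * q) ^ b *
        Flight.fiberBound D (n + 1) (groupParticles r (s * T)) (groupSlots T) b)
      ≤ Fintype.card (Flight D (n + 1) (groupParticles r (s * T)) (groupSlots T)) := by
  set Z : ℝ :=
    (Fintype.card (Flight D (n + 1) (groupParticles r (s * T)) (groupSlots T)) : ℝ)
  set f := Flight.fiberBound D (n + 1) (groupParticles r (s * T)) (groupSlots T)
  have term_le {b i k : ℕ} (hb : b < N) (hi : i ≤ n) (hib : T * i ≤ b) (hbk : b + 1 ≤ T * i + k)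
      (hk : N * (2 * r.factorial) * X ^ k ≤ (D : ℝ) ^ r * 2 ^ i) :
      q⁻¹ ^ (b + 1) * ((1 + Q * q) ^ b * f b) ≤ Z / N := by
    have inv_pow_le : q⁻¹ ^ (b + 1) ≤ X ^ (T * i) * X ^ k := by
      rw [← pow_add]
      exact (pow_le_pow_left₀ (by positivity) hqX _).trans (pow_le_pow_right₀ hX1 hbk)
    have hN0 : (0 : ℝ) < N := by exact_mod_cast (Nat.zero_le b).trans_lt hb
    exact mul_mul_le_div inv_pow_le (by positivity) (hQ b hb) (Nat.cast_nonneg _)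
      (by positivity) (by positivity) (by positivity) hN0
      (fiberBound_groups_mul_le hs hC (by positivity) hX hr hrD hD hT hfac hi hib) hk
  calc ∑ b ∈ range N, q⁻¹ ^ (b + 1) * ((1 + Q * q) ^ b * f b) ≤ ∑ _b ∈ range N, Z / N := by
        refine sum_le_sum fun b hb => ?_
        have hbN := mem_range.1 hb
        rcases lt_or_ge (b / T) n with hbn | hbn
        · exact term_le hbN hbn.le (Nat.mul_div_le b T) (Nat.lt_mul_div_succ b hT)
            (hshort.trans (le_mul_of_one_le_right (by positivity) (one_le_pow₀ one_le_two)))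
        · exact term_le hbN le_rfl
            ((Nat.mul_le_mul_left T hbn).trans (Nat.mul_div_le b T)) (by lia) hlong
    _ ≤ Z := by
        rw [sum_const, card_range, nsmul_eq_mul, mul_div_left_comm]
        exact mul_le_of_le_one_right (by positivity) (div_self_le_one _)

end FiberSum

theorem one_add_pow_le_two {x : ℝ} {b : ℕ} (hx : 0 ≤ x) (hbx : b * x ≤ 1 / 2) :
    (1 + x) ^ b ≤ 2 := by
  calc (1 + x) ^ b ≤ exp x ^ b := by
        gcongr
        linarith [add_one_le_exp x]
    _ = exp (b * x) := (exp_nat_mul _ _).symm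
    _ ≤ exp (Real.log 2) := exp_le_exp.2 (by linarith [log_two_gt_d9])
    _ = 2 := exp_log two_pos

theorem measure_LIP_eq_zero_of_groups {α s C X q : ℝ} {D n r T : ℕ} (hα : α ∈ Set.Ico 0 1)
    (hs : (1 - α) * s = 1) (hC : 0 < C) (hX1 : 1 ≤ X) (hX : X * C = (D : ℝ) ^ s)
    (hr : ⌈s * T⌉₊ ≤ r) (hrD : r ≤ D) (hD : 0 < D) (hT : 0 < T)
    (hfac : ∀ m : ℕ, |m - s * T| < 1 → 2 * m.factorial ≤ (T : ℝ) ^ m * C ^ T)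
    (hq : 0 < q) (hqX : q⁻¹ ≤ X)
    (hcollide : (r + 1) * (r + ⌈s * T * n⌉₊ + 1 : ℝ) ^ r * q * (T * n + (r + 5) : ℕ) ≤ 1 / 2)
    (hshort : (T * n + (r + 5) : ℕ) * (2 * r.factorial) * X ^ T ≤ (D : ℝ) ^ r)
    (hlong : (T * n + (r + 5) : ℕ) * (2 * r.factorial) * X ^ (r + 5) ≤ (D : ℝ) ^ r * 2 ^ n)
    {P : Measure (Config (D + 1))} (hP : IsBernoulli (1 - q) P) :
    P (LIP α (etaK (D + 1) (D + 1))) = 0 := by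
  have hα1 : 0 < 1 - α := sub_pos.2 hα.2
  have hs0 : 0 ≤ s := (pos_of_mul_pos_right (hs.symm ▸ one_pos : 0 < (1 - α) * s) hα1.le).le
  have sum_eq := sum_groupParticles (r := r) (show 0 ≤ s * T by positivity) n
  have gain : (1 - α) * (∑ i ∈ range (n + 1), groupParticles r (s * T) i + 1 : ℕ)
      ≤ (T * n + (r + 5) : ℕ) - 3 := by
    have := (Nat.ceil_lt_add_one (show 0 ≤ s * T * n by positivity)).le
    calc (1 - α) * (∑ i ∈ range (n + 1), groupParticles r (s * T) i + 1 : ℕ)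
        ≤ (1 - α) * (s * T * n + (r + 2)) := by
          refine mul_le_mul_of_nonneg_left ?_ hα1.le
          rw [sum_eq]
          push_cast
          linarith
      _ = T * n + (1 - α) * (r + 2) := by linear_combination (T : ℝ) * n * hs
      _ ≤ T * n + (r + 2) := by
          gcongr
          exact mul_le_of_le_one_left (by positivity) (by linarith [hα.1])
      _ = (T * n + (r + 5) : ℕ) - 3 := by push_cast; ring
  have : Nonempty (Flight D (n + 1) (groupParticles r (s * T)) (groupSlots T)) :=
    ⟨fun i _ => (⟨0, hD⟩, ⟨0, groupSlots_pos hT i⟩)⟩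
  refine measure_LIP_eq_zero_of_half_le (L := groupSlots T) hα.1
    (by rw [startTime_groupSlots]; lia) (by lia) gain hP fun x h => ?_
  refine half_le_measureReal_iUnion_flightClosed hP (by linarith)
    (fun i _ => groupParticles_le hr i) ?_ x h
  rw [_root_.sub_sub_cancel, sum_eq]
  refine sum_fiberBound_groups_le hs0 hC hX1 hX hr hrD hD hT hfac hq hqX
    (fun b hb => one_add_pow_le_two (by positivity) ?_) le_rfl hshort hlong
  refine le_trans ?_ hcollide
  rw [mul_comm]
  push_cast
  gcongr
  exact_mod_cast hb.le

theorem tendsto_size_atTop : Tendsto Nat.size atTop atTop :=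
  tendsto_atTop_atTop.2 fun b => ⟨2 ^ b, fun _ hD => (Nat.lt_size.2 hD).le⟩

theorem eventually_mul_size_pow_le (c : ℝ) (k : ℕ) :
    ∀ᶠ D : ℕ in atTop, c * (Nat.size D : ℝ) ^ k ≤ D := by
  have tendsto_zero := ((tendsto_pow_const_div_const_pow_of_one_lt k
    (one_lt_two (α := ℝ))).const_mul (2 * c)).comp tendsto_size_atTop
  rw [mul_zero] at tendsto_zero
  filter_upwards [tendsto_zero.eventually_le_const one_pos, eventually_ge_atTop 1] with D hle hD
  have pow_le : 2 ^ (Nat.size D - 1) ≤ D := Nat.lt_size.1 (Nat.sub_one_lt (Nat.size_pos.2 hD).ne')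
  have pow_size_le : (2 : ℝ) ^ Nat.size D ≤ 2 * D := by
    rw [← mul_pow_sub_one (Nat.size_pos.2 hD).ne']
    exact_mod_cast Nat.mul_le_mul_left 2 pow_le
  rw [Function.comp_apply, mul_div_assoc', div_le_one (by positivity)] at hle
  linarith

theorem cast_mul_mul_add_le {ℓ : ℕ} (hℓ : 0 < ℓ) (T a e : ℕ) :
    ((T * (a * ℓ) + e : ℕ) : ℝ) ≤ (T * a + e) * ℓ := by
  exact_mod_cast show T * (a * ℓ) + e ≤ (T * a + e) * ℓ by nlinarith

theorem pow_succ_le_pow_mul_two_pow_size {D r : ℕ} (hr : 0 < r) (a : ℕ) :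
    D ^ (a + 1) ≤ D ^ r * 2 ^ (a * Nat.size D) := by
  rw [pow_succ', mul_comm a, pow_mul]
  exact Nat.mul_le_mul (Nat.le_self_pow hr.ne' D) (Nat.pow_le_pow_left D.lt_size_self.le a)

theorem eventually_slots_mul_pow_le (s C F : ℝ) (hC : 0 < C) (hF : 0 ≤ F) (T a e : ℕ) {f k : ℕ}
    (h : s * f ≤ k) :
    ∀ᶠ D : ℕ in atTop,
      (T * (a * Nat.size D) + e : ℕ) * F * ((D : ℝ) ^ s / C) ^ f ≤ (D : ℝ) ^ (k + 1) := by
  filter_upwards [eventually_mul_size_pow_le ((T * a + e) * F / C ^ f) 1, eventually_ge_atTop 1]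
    with D hle hD
  have hD1 : (1 : ℝ) ≤ D := by exact_mod_cast hD
  have rpow_le : ((D : ℝ) ^ s) ^ f ≤ (D : ℝ) ^ k := by
    rw [← Real.rpow_natCast, ← Real.rpow_natCast, ← Real.rpow_mul (by positivity)]
    exact Real.rpow_le_rpow_of_exponent_le hD1 h
  calc (T * (a * Nat.size D) + e : ℕ) * F * ((D : ℝ) ^ s / C) ^ f
      ≤ (T * a + e) * Nat.size D * F * ((D : ℝ) ^ s / C) ^ f := by
        gcongr
        exact cast_mul_mul_add_le (Nat.size_pos.2 hD) T a e
    _ = (T * a + e) * F / C ^ f * (Nat.size D : ℝ) ^ 1 * ((D : ℝ) ^ s) ^ f := by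
        rw [div_pow]
        ring
    _ ≤ D * (D : ℝ) ^ k := by gcongr
    _ = (D : ℝ) ^ (k + 1) := (pow_succ' _ _).symm

theorem eventually_mul_succ_rpow_le {C C' : ℝ} (s : ℝ) (hC' : 0 < C') (hC : C < C') :
    ∀ᶠ D : ℕ in atTop, C * ((D + 1 : ℕ) : ℝ) ^ s ≤ C' * (D : ℝ) ^ s := by
  have tendsto_one := (tendsto_natCast_div_add_atTop (1 : ℝ)).rpow_const (p := s)
    (Or.inl one_ne_zero)
  rw [Real.one_rpow] at tendsto_one
  filter_upwards [tendsto_one.eventually_const_le ((div_lt_one hC').2 hC)] with D hD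
  rw [Real.div_rpow (by positivity) (by positivity),
    div_le_div_iff₀ hC' (by positivity)] at hD
  push_cast
  linarith

theorem eventually_collisions_le {s C : ℝ} (hs : 1 ≤ s) (hC : 0 < C) (a r T : ℕ) :
    ∀ᶠ D : ℕ in atTop, (r + 1) * (r + ⌈s * T * (a * Nat.size D : ℕ)⌉₊ + 1 : ℝ) ^ r *
      (C / ((D + 1 : ℕ) : ℝ) ^ s) * (T * (a * Nat.size D) + (r + 5) : ℕ) ≤ 1 / 2 := by
  set A : ℝ := r + ⌈s * T * a⌉₊ + 1
  set B : ℝ := T * a + (r + 5 : ℕ)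
  filter_upwards [eventually_mul_size_pow_le (2 * ((r + 1) * A ^ r * C * B)) (r + 1),
    eventually_ge_atTop 1] with D hle hD
  have hℓ : (1 : ℝ) ≤ Nat.size D := by exact_mod_cast Nat.size_pos.2 hD
  have particles_le : (r + ⌈s * T * (a * Nat.size D : ℕ)⌉₊ + 1 : ℝ) ≤ A * Nat.size D := by
    have : (⌈s * T * (a * Nat.size D : ℕ)⌉₊ : ℝ) ≤ ⌈s * T * a⌉₊ * Nat.size D := by
      rw [← Nat.cast_mul, Nat.cast_le, Nat.ceil_le]
      push_cast
      rw [← mul_assoc]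
      gcongr
      exact Nat.le_ceil _
    have := le_mul_of_one_le_right (show (0 : ℝ) ≤ r + 1 by positivity) hℓ
    linarith
  have slots_le : ((T * (a * Nat.size D) + (r + 5) : ℕ) : ℝ) ≤ B * Nat.size D :=
    cast_mul_mul_add_le (Nat.size_pos.2 hD) T a (r + 5)
  have le_rpow : (D : ℝ) ≤ ((D + 1 : ℕ) : ℝ) ^ s :=
    (Nat.cast_le.2 D.le_succ).trans (Real.self_le_rpow_of_one_le (by simp) hs)
  calc (r + 1) * (r + ⌈s * T * (a * Nat.size D : ℕ)⌉₊ + 1 : ℝ) ^ r *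
      (C / ((D + 1 : ℕ) : ℝ) ^ s) * (T * (a * Nat.size D) + (r + 5) : ℕ)
      ≤ (r + 1) * (A * Nat.size D) ^ r * (C / D) * (B * Nat.size D) := by gcongr
    _ = 2 * ((r + 1) * A ^ r * C * B) * (Nat.size D : ℝ) ^ (r + 1) / D / 2 := by
        rw [mul_pow, pow_succ _ r]
        ring
    _ ≤ 1 / 2 := by
        gcongr
        exact (div_le_one (by positivity)).2 hle

theorem eventually_measure_LIP_eq_zero {α s C : ℝ} (hα : α ∈ Set.Ico 0 1) (hs : (1 - α) * s = 1)
    (hC : (s / exp 1) ^ s < C) :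
    ∀ᶠ D : ℕ in atTop, ∀ P : Measure (Config (D + 1)),
      IsBernoulli (1 - C / ((D + 1 : ℕ) : ℝ) ^ s) P → P (LIP α (etaK (D + 1) (D + 1))) = 0 := by
  have hs1 : 1 ≤ s := by nlinarith [hα.1, hα.2]
  obtain ⟨c, hsc, hcC⟩ := exists_between hC
  have hc : 0 < c := lt_of_le_of_lt (by positivity) hsc
  have hC0 : 0 < C := hc.trans hcC
  obtain ⟨T, hT, hfac⟩ :=
    ((eventually_ge_atTop 1).and (eventually_mul_factorial_le hs1 hsc two_pos)).exists
  set r := ⌈s * T⌉₊ + 1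
  set a := ⌈s * (r + 5 : ℕ)⌉₊
  filter_upwards [eventually_ge_atTop r, tendsto_natCast_atTop_atTop.eventually_ge_atTop c,
    eventually_mul_succ_rpow_le s hC0 hcC, eventually_collisions_le hs1 hC0 a r T,
    eventually_slots_mul_pow_le s c (2 * r.factorial) hc (by positivity) T a (r + 5)
      (Nat.le_ceil (s * T)),
    eventually_slots_mul_pow_le s c (2 * r.factorial) hc (by positivity) T a (r + 5)
      (Nat.le_ceil (s * (r + 5 : ℕ)))]
    with D hrD hcD hsucc hcollide hshort hlong P hP
  have hD : 0 < D := (Nat.succ_pos _).trans_le hrD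
  have hD1 : (1 : ℝ) ≤ D := by exact_mod_cast hD
  have pow_le : (D : ℝ) ^ (a + 1) ≤ D ^ r * 2 ^ (a * Nat.size D) := by
    exact_mod_cast pow_succ_le_pow_mul_two_pow_size (Nat.succ_pos _) a
  refine measure_LIP_eq_zero_of_groups (X := (D : ℝ) ^ s / c) hα hs hc
    ((one_le_div hc).2 (hcD.trans (Real.self_le_rpow_of_one_le hD1 hs1)))
    (div_mul_cancel₀ _ hc.ne') (Nat.le_succ _) hrD hD hT hfac (by positivity) ?_ hcollide
    hshort (hlong.trans pow_le) hP
  rw [inv_div, div_le_div_iff₀ hC0 hc]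
  linarith

theorem limsup_one_sub_criticalProb_le {α C : ℝ} (hα : α ∈ Set.Ico 0 1)
    (hC : (1 / (1 - α) / exp 1) ^ (1 / (1 - α)) < C) {P : (n : ℕ) → ℝ → Measure (Config n)}
    (hP : ∀ n : ℕ, ∀ p ∈ Set.Icc (0 : ℝ) 1, IsBernoulli p (P n p))
    {pc : ℕ → ℝ} (hpc : ∀ d : ℕ, 1 ≤ d → IsCriticalProb (P d) α (etaK d d) (pc d)) :
    atTop.limsup (fun d : ℕ => (1 - pc d) * (d : ℝ) ^ (1 / (1 - α))) ≤ C := by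
  have hα1 : 0 < 1 - α := sub_pos.2 hα.2
  have hC0 : 0 < C := lt_of_le_of_lt (by positivity) hC
  refine limsup_le_of_le ?_ ?_
  · refine IsBoundedUnder.isCoboundedUnder_le ⟨0, ?_⟩
    rw [eventually_map]
    filter_upwards [eventually_ge_atTop 1] with d hd
    exact mul_nonneg (sub_nonneg.2 (hpc d hd).1.2.le) (by positivity)
  · rw [← map_add_atTop_eq_nat 1, eventually_map]
    filter_upwards [eventually_measure_LIP_eq_zero hα (mul_one_div_cancel hα1.ne') hC] with D hD
    obtain ⟨hmem, -, supercritical⟩ := hpc (D + 1) (by lia)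
    by_contra! hlt
    have hq0 : 0 < C / ((D + 1 : ℕ) : ℝ) ^ (1 / (1 - α)) := by positivity
    rw [← div_lt_iff₀ (by positivity)] at hlt
    have measure_zero := hD _ (hP (D + 1) _ ⟨by linarith [hmem.1], by linarith⟩)
    rw [supercritical _ (by linarith) (by linarith)] at measure_zero
    exact one_ne_zero measure_zero

theorem div_exp_rpow_le {s θ : ℝ} (hs : 1 ≤ s) (hθ : 0 < θ)
    (h : θ * exp θ / (exp θ - 1) = s) : (s / exp 1) ^ s ≤ θ ^ s / (exp θ - 1) := by
  have hE : θ ≤ exp θ - 1 := by linarith [add_one_le_exp θ]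
  have hE0 : 0 < exp θ - 1 := hθ.trans_le hE
  have hE_eq : exp θ - 1 = θ / s * exp θ := by
    rw [← h]
    field_simp
  have s_sub : s - θ = θ / (exp θ - 1) := by
    rw [← h, div_sub' hE0.ne']
    ring
  have exponent_le : (s / θ - 1) * (s - 1) ≤ s - θ := by
    have : s - θ ≤ 1 := s_sub ▸ (div_le_one hE0).2 hE
    have : 0 ≤ s - θ := s_sub ▸ by positivity
    rw [div_sub_one hθ.ne', div_mul_eq_mul_div, div_le_iff₀ hθ]
    nlinarith
  have main : (s / θ) ^ s * (exp θ - 1) ≤ exp s := by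
    calc (s / θ) ^ s * (exp θ - 1) = (s / θ) ^ (s - 1) * exp θ := by
          rw [hE_eq, Real.rpow_sub_one (by positivity)]
          field_simp
      _ ≤ exp (s / θ - 1) ^ (s - 1) * exp θ := by
          gcongr
          linarith [add_one_le_exp (s / θ - 1)]
      _ = exp ((s / θ - 1) * (s - 1) + θ) := by rw [← exp_mul, exp_add]
      _ ≤ exp s := exp_le_exp.2 (by linarith)
  rw [Real.div_rpow (by positivity) (by positivity), ← exp_mul, one_mul,
    div_le_div_iff₀ (exp_pos s) hE0]
  rw [Real.div_rpow (by positivity) (by positivity), div_mul_eq_mul_div,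
    div_le_iff₀ (by positivity)] at main
  linarith

end

theorem qL_limsup_upper_bound_dim_general
    (α : ℝ) (hα : α ∈ Set.Ico (0 : ℝ) 1)
    (P : (n : ℕ) → ℝ → Measure (Config n))
    (hP : ∀ n : ℕ, ∀ p ∈ Set.Icc (0 : ℝ) 1, IsBernoulli p (P n p))
    (pc : ℕ → ℝ) (hpc : ∀ d : ℕ, 1 ≤ d → IsCriticalProb (P d) α (etaK d d) (pc d)) :
    atTop.limsup (fun d : ℕ => (1 - pc d) * (d : ℝ) ^ ((1 : ℝ) / (1 - α))) ≤
      (1 / (1 - α) / Real.exp 1) ^ (1 / (1 - α)) :=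
  le_of_forall_gt_imp_ge_of_dense fun _ hC => limsup_one_sub_criticalProb_le hα hC hP hpc

/-- Asymptotic upper bound for `d → ∞`: for every `α ∈ [0,1)`,
`limsup_{d→∞} q_L(α,d,d) · d^{1/(1−α)} ≤ C(α)`, where `C(0) = 1` and, for `α ∈ (0,1)`,
`C(α) = θ^{1/(1−α)}/(e^θ − 1)` with `θ > 0` the unique solution of
`θ·e^θ/(e^θ − 1) = 1/(1−α)`. -/
theorem qL_limsup_upper_bound_dim
    (α : ℝ) (hα : α ∈ Set.Ico (0 : ℝ) 1)
    (P : (n : ℕ) → ℝ → Measure (Config n))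
    (hP : ∀ n : ℕ, ∀ p ∈ Set.Icc (0 : ℝ) 1, IsBernoulli p (P n p))
    (pc : ℕ → ℝ) (hpc : ∀ d : ℕ, 1 ≤ d → IsCriticalProb (P d) α (etaK d d) (pc d)) :
    (α = 0 →
      atTop.limsup (fun d : ℕ => (1 - pc d) * (d : ℝ) ^ ((1 : ℝ) / (1 - α))) ≤ 1) ∧
    ∀ θ : ℝ, 0 < θ → θ * Real.exp θ / (Real.exp θ - 1) = 1 / (1 - α) →
      atTop.limsup (fun d : ℕ => (1 - pc d) * (d : ℝ) ^ ((1 : ℝ) / (1 - α))) ≤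
        θ ^ ((1 : ℝ) / (1 - α)) / (Real.exp θ - 1) := by
  have general := qL_limsup_upper_bound_dim_general α hα P hP pc hpc
  have hs : 1 ≤ 1 / (1 - α) := (one_le_div (sub_pos.2 hα.2)).2 (by linarith [hα.1])
  refine ⟨?_, fun θ hθ hθs => general.trans (div_exp_rpow_le hs hθ hθs)⟩
  rintro rfl
  have inv_exp_one_le : 1 / (1 - 0) / Real.exp 1 ≤ 1 := by
    simpa using inv_le_one_of_one_le₀ (Real.one_le_exp zero_le_one)
  exact general.trans (Real.rpow_le_one (by positivity) inv_exp_one_le (by simp))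
end
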